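/- Every finite group occurs as a Galois group over ℂ(t); that is, for every finite group G there exists a finite Galois extension N of the field ℂ(t) of rational functions in one indeterminate over ℂ with Gal(N/ℂ(t)) isomorphic to G. -/

import Mathlib

/-!
Algebraic patching in the style of Haran and Völklein. Realize `ℂ(t)` inside the fraction field
`K` of a weighted Wiener algebra of Laurent series converging on an annulus around the unit
circle. A Galois extension of `ℂ(t)` with group `G` is encoded by its image in the product `G →
K`, and it is required to have a basis with good entries. For a cyclic group, the Kummer extension
generated by an `n`-th root of `1 + c t` has a basis of power series in `t`. If `H₁` and `H₂`
generate `G` and are realized over the power series in `t` and over those in `t⁻¹`, the two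
realizations are induced to `G` and patched: the transition matrix between their bases factors, by
Cartan's lemma and Laurent polynomial approximation, into a power series in `t` times a series in
`t⁻¹` with rational coefficients, and the only functions common to both sides are the rational
ones. Substituting `t⁻¹` or `1 + t/4` for `t` moves a realization to power series in `t⁻¹` or `t`,
so patching can be repeated until the cyclic subgroups of a given group have generated all of it.
-/

namespace GaloisPatching

section Lattices

open Matrix

theorem mulVec_mem {K m n : Type*} [Ring K] [Fintype n] {S : Subring K} {A : Matrix m n K}
    {v : n → K} (hA : ∀ i j, A i j ∈ S) (hv : ∀ j, v j ∈ S) (i : m) : (A *ᵥ v) i ∈ S :=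
  S.sum_mem fun j _ ↦ S.mul_mem (hA i j) (hv j)

section GeneralLinearGroup

/-- The group of invertible matrices over `K` such that the entries of the matrix and those of its
inverse lie in the subring `S`, that is, `GL(S)` viewed inside `GL(K)`. -/
def glOver (ι : Type*) [Fintype ι] [DecidableEq ι] {K : Type*} [CommRing K] (S : Subring K) :
    Subgroup (GL ι K) :=
  S.matrix.toSubmonoid.units

variable {ι K L : Type*} [Fintype ι] [DecidableEq ι] [CommRing K] [CommRing L]

theorem mem_glOver {S : Subring K} {M : GL ι K} :
    M ∈ glOver ι S ↔ (∀ i j, M.val i j ∈ S) ∧ ∀ i j, M⁻¹.val i j ∈ S :=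
  Iff.rfl

theorem glOver_mono {S T : Subring K} (h : S ≤ T) : glOver ι S ≤ glOver ι T :=
  fun _ hM ↦ ⟨fun i j ↦ h (hM.1 i j), fun i j ↦ h (hM.2 i j)⟩

theorem map_mem_glOver {S : Subring K} {T : Subring L} {ψ : K →+* L}
    (hψ : ∀ x ∈ S, ψ x ∈ T) {M : GL ι K} (hM : M ∈ glOver ι S) :
    GeneralLinearGroup.map ψ M ∈ glOver ι T :=
  ⟨fun i j ↦ hψ _ (hM.1 i j), fun i j ↦ hψ _ (hM.2 i j)⟩

theorem exists_map_eq_of_mem_glOver_range {ψ : K →+* L} (hψ : Function.Injective ψ) {M : GL ι L}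
    (hM : M ∈ glOver ι ψ.range) : ∃ N : GL ι K, GeneralLinearGroup.map ψ N = M := by
  choose A hA using hM.1
  choose B hB using hM.2
  have hinj : Function.Injective (ψ.mapMatrix (m := ι)) := map_injective hψ
  have hA' : ψ.mapMatrix (of A) = M.val := Matrix.ext hA
  have hB' : ψ.mapMatrix (of B) = M⁻¹.val := Matrix.ext hB
  have hAB : of A * of B = 1 := hinj <| by rw [map_mul, hA', hB', Units.mul_inv, map_one]
  exact ⟨⟨of A, of B, hAB, mul_eq_one_comm.1 hAB⟩, Units.ext hA'⟩

theorem mem_glOver_bot {E K : Type*} [Field E] [Field K] [Algebra E K] {M : GL ι K}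
    (hM : ∀ i j, M.val i j ∈ (⊥ : Subalgebra E K)) :
    M ∈ glOver ι (⊥ : Subalgebra E K).toSubring := by
  choose A hA using hM
  have hA' : (algebraMap E K).mapMatrix (of A) = M.val := Matrix.ext hA
  have hdet : (of A).det ≠ 0 := by
    intro h
    refine (GeneralLinearGroup.det M).ne_zero ?_
    rw [GeneralLinearGroup.val_det_apply, ← hA', ← RingHom.map_det, h, map_zero]
  have hM' : GeneralLinearGroup.map (algebraMap E K)
      (GeneralLinearGroup.mkOfDetNeZero (of A) hdet) = M := Units.ext hA'
  rw [← hM']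
  exact map_mem_glOver (S := ⊤)
    (fun a _ ↦ (⊥ : Subalgebra E K).algebraMap_mem a) ⟨fun _ _ ↦ trivial, fun _ _ ↦ trivial⟩

end GeneralLinearGroup

variable {E K ι κ σ : Type*} [Field E] [Field K] [Algebra E K]
  [Fintype ι] [DecidableEq ι] [Fintype κ] [DecidableEq κ] [Fintype σ] [DecidableEq σ]

theorem sum_smul_col (M : GL ι K) (f : ι → K) : ∑ j, (M⁻¹.val *ᵥ f) j • M.val.col j = f := by
  conv_rhs => rw [← one_mulVec f, ← Units.mul_inv M, ← mulVec_mulVec, mulVec_eq_sum]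
  exact Finset.sum_congr rfl fun j _ ↦ (op_smul_eq_smul _ _).symm

/-- The free `P`-submodule of `ι → K` spanned by the columns of `M`, encoded as the set of vectors
whose coordinates with respect to these columns lie in `P`. -/
def lattice (P : Subalgebra E K) (M : GL ι K) : Submodule P (ι → K) where
  carrier := {f | ∀ i, (M⁻¹.val *ᵥ f) i ∈ P}
  add_mem' hf hg i := by
    rw [mulVec_add]
    exact P.add_mem (hf i) (hg i)
  zero_mem' i := by
    rw [mulVec_zero]
    exact P.zero_mem
  smul_mem' c f hf i := by
    rw [mulVec_smul]
    exact P.mul_mem c.2 (hf i)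

theorem mem_lattice {P : Subalgebra E K} {M : GL ι K} {f : ι → K} :
    f ∈ lattice P M ↔ ∀ i, (M⁻¹.val *ᵥ f) i ∈ P :=
  Iff.rfl

theorem mulVec_mem_lattice {P : Subalgebra E K} {M : GL ι K} {v : ι → K} :
    M.val *ᵥ v ∈ lattice P M ↔ ∀ i, v i ∈ P := by
  rw [mem_lattice, mulVec_mulVec, Units.inv_mul, one_mulVec]

theorem col_mem_lattice (P : Subalgebra E K) (M : GL ι K) (j : ι) : M.val.col j ∈ lattice P M := by
  rw [← mulVec_single_one, mulVec_mem_lattice]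
  intro i
  obtain rfl | hij := eq_or_ne i j
  · simp [P.one_mem]
  · simp [hij, P.zero_mem]

theorem mem_lattice_inf {P P' : Subalgebra E K} {M : GL ι K} {f : ι → K} :
    f ∈ lattice (P ⊓ P') M ↔ f ∈ lattice P M ∧ f ∈ lattice P' M := by
  simp only [mem_lattice, Algebra.mem_inf, forall_and]

theorem lattice_mul_right (P : Subalgebra E K) (M : GL ι K) {X : GL ι K}
    (hX : X ∈ glOver ι P.toSubring) : lattice P (M * X) = lattice P M := by
  ext f
  have hinv : (M * X)⁻¹.val *ᵥ f = X⁻¹.val *ᵥ (M⁻¹.val *ᵥ f) := by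
    rw [_root_.mul_inv_rev, Units.val_mul, mulVec_mulVec]
  have hself : M⁻¹.val *ᵥ f = X.val *ᵥ ((M * X)⁻¹.val *ᵥ f) := by
    rw [hinv, mulVec_mulVec, Units.mul_inv, one_mulVec]
  simp only [mem_lattice]
  refine ⟨fun h i ↦ ?_, fun h i ↦ ?_⟩
  · rw [hself]
    exact mulVec_mem hX.1 h i
  · rw [hinv]
    exact mulVec_mem hX.2 h i

theorem lattice_eq_span (P : Subalgebra E K) (M : GL ι K) :
    lattice P M = Submodule.span P (lattice (⊥ : Subalgebra E K) M : Set (ι → K)) := by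
  refine le_antisymm (fun f hf ↦ ?_) (Submodule.span_le.2 fun f hf i ↦ bot_le (a := P) (hf i))
  rw [← sum_smul_col M f]
  exact Submodule.sum_mem _ fun j _ ↦
    Submodule.smul_mem _ (⟨_, hf j⟩ : P) (Submodule.subset_span (col_mem_lattice ⊥ M j))

theorem mem_lattice_bot_iff_mem_span {M : GL ι K} {f : ι → K} :
    f ∈ lattice (⊥ : Subalgebra E K) M ↔ f ∈ Submodule.span E (Set.range M.val.col) := by
  constructor
  · intro hf
    rw [← sum_smul_col M f]
    refine Submodule.sum_mem _ fun j _ ↦ ?_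
    obtain ⟨a, ha⟩ := hf j
    have hsmul : (M⁻¹.val *ᵥ f) j • M.val.col j = a • M.val.col j := by
      rw [← ha]
      exact algebraMap_smul K a _
    rw [hsmul]
    exact Submodule.smul_mem _ a (Submodule.subset_span (Set.mem_range_self j))
  · intro hf
    induction hf using Submodule.span_induction with
    | mem f hf =>
      obtain ⟨j, rfl⟩ := hf
      exact col_mem_lattice ⊥ M j
    | zero => exact Submodule.zero_mem _
    | add f g _ _ hf hg => exact Submodule.add_mem _ hf hg
    | smul a f _ hf =>
      rw [← algebraMap_smul (⊥ : Subalgebra E K) a f]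
      exact Submodule.smul_mem _ _ hf

theorem mem_lattice_map {L : Type*} [Field L] {E' : Type*} [Field E'] [Algebra E' L] {ψ : K →+* L}
    {P : Subalgebra E K} {P' : Subalgebra E' L} (hψ : P.toSubring.map ψ = P'.toSubring)
    {M : GL ι K} {f : ι → L} :
    f ∈ lattice P' (GeneralLinearGroup.map ψ M) ↔ ∃ f₀ ∈ lattice P M, ψ ∘ f₀ = f := by
  have hmap (N : GL ι K) (v : ι → K) :
      (GeneralLinearGroup.map ψ N).val *ᵥ (ψ ∘ v) = ψ ∘ (N.val *ᵥ v) :=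
    (funext fun i ↦ RingHom.map_mulVec ψ N.val v i).symm
  have hP' (x : L) : x ∈ P' ↔ ∃ y ∈ P, ψ y = x := by
    rw [← Subalgebra.mem_toSubring, ← hψ]
    rfl
  constructor
  · intro hf
    choose v hvP hv using fun i ↦ (hP' _).1 (hf i)
    refine ⟨M.val *ᵥ v, mulVec_mem_lattice.2 hvP, ?_⟩
    rw [← hmap, show ψ ∘ v = _ from funext hv, mulVec_mulVec, Units.mul_inv, one_mulVec]
  · rintro ⟨f₀, hf₀, rfl⟩ i
    rw [← map_inv, hmap]
    exact (hP' _).2 ⟨_, hf₀ i, rfl⟩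

/-- The block diagonal matrix with a copy of the block `M` for each element of `σ`, reindexed along
an enumeration `e` of its rows and columns. -/
def blockGL (e : κ × σ ≃ ι) : GL κ K →* GL ι K :=
  Units.map (((reindexRingEquiv K e).toRingHom.comp
    (blockDiagonalRingHom κ σ K)).comp (Pi.constRingHom σ _)).toMonoidHom

theorem blockGL_apply (e : κ × σ ≃ ι) (M : GL κ K) (p q : κ × σ) :
    (blockGL e M).val (e p) (e q) = if p.2 = q.2 then M.val p.1 q.1 else 0 := by
  simp [blockGL, blockDiagonal_apply]

theorem blockGL_mulVec (e : κ × σ ≃ ι) (M : GL κ K) (f : ι → K) (k : κ) (s : σ) :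
    ((blockGL e M).val *ᵥ f) (e (k, s)) = (M.val *ᵥ fun k' ↦ f (e (k', s))) k := by
  simp only [mulVec, dotProduct, ← e.sum_comp, blockGL_apply, Fintype.sum_prod_type, ite_mul,
    zero_mul, Finset.sum_ite_eq, Finset.mem_univ, if_true]

theorem blockGL_mem_glOver {S : Subring K} (e : κ × σ ≃ ι) {M : GL κ K} (hM : M ∈ glOver κ S) :
    blockGL e M ∈ glOver ι S := by
  have hentry {N : GL κ K} (hN : ∀ k k', N.val k k' ∈ S) (i j : ι) :
      (blockGL e N).val i j ∈ S := by
    obtain ⟨p, rfl⟩ := e.surjective i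
    obtain ⟨q, rfl⟩ := e.surjective j
    rw [blockGL_apply]
    split_ifs
    exacts [hN _ _, S.zero_mem]
  exact mem_glOver.2 ⟨hentry hM.1, map_inv (blockGL e) M ▸ hentry (mem_glOver.1 hM).2⟩

theorem mem_lattice_blockGL {P : Subalgebra E K} {e : κ × σ ≃ ι} {M : GL κ K} {f : ι → K} :
    f ∈ lattice P (blockGL e M) ↔ ∀ s, (fun k ↦ f (e (k, s))) ∈ lattice P M := by
  simp only [mem_lattice, ← map_inv, ← e.forall_congr_right, Prod.forall, blockGL_mulVec]
  exact forall_comm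

end Lattices

section Forms

open Matrix

variable {E K L E' G G' : Type*} [Field E] [Field K] [Algebra E K] [Field E'] [Field L]
  [Algebra E' L] [Group G] [Fintype G] [DecidableEq G] [Group G'] [Fintype G'] [DecidableEq G']

/-- Composition with `φ` as an algebra homomorphism `f ↦ f ∘ φ` between algebras of functions. -/
def precomp (A : Type*) {B X Y : Type*} [CommSemiring A] [Semiring B] [Algebra A B] (φ : X → Y) :
    (Y → B) →ₐ[A] (X → B) :=
  AlgHom.pi fun x ↦ Pi.evalAlgHom A (fun _ ↦ B) (φ x)

@[simp]
theorem precomp_apply {A B X Y : Type*} [CommSemiring A] [Semiring B] [Algebra A B] (φ : X → Y)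
    (f : Y → B) (x : X) : precomp A φ f x = f (φ x) :=
  rfl

/-- An `E`-algebra `F` of `K`-valued functions on the group `G` is a *Galois form* over the subring
`R` of `K` if the columns of some matrix in `GL(R)` form an `E`-basis of `F`, if `F` is stable under
left translations, and if `F` has only the trivial idempotents. Then `F` is a Galois extension field
of `E` with group `G`, each element of which is encoded as the family of its conjugates in `K`. -/
structure IsGaloisForm (R : Subring K) (F : Subalgebra E (G → K)) : Prop where
  exists_lattice : ∃ M ∈ glOver G R, ∀ f, f ∈ F ↔ f ∈ lattice (⊥ : Subalgebra E K) M
  translate_mem : ∀ g, ∀ f ∈ F, precomp E (g * ·) f ∈ F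
  eq_zero_or_one : ∀ f ∈ F, IsIdempotentElem f → f = 0 ∨ f = 1

/-- The group `G` is realized over `E` by a Galois form over `R`. -/
def HasGaloisForm (E : Type*) {K : Type*} [Field E] [Field K] [Algebra E K] (R : Subring K)
    (G : Type*) [Group G] [Fintype G] [DecidableEq G] : Prop :=
  ∃ F : Subalgebra E (G → K), IsGaloisForm R F

theorem HasGaloisForm.of_mulEquiv {R : Subring K} (e : G ≃* G') :
    HasGaloisForm E R G → HasGaloisForm E R G' := by
  rintro ⟨F, ⟨M, hM, hFM⟩, htranslate, hidem⟩
  have hinj : Function.Injective (precomp E (B := K) e) := e.surjective.injective_comp_right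
  refine ⟨F.comap (precomp E e),
    ⟨blockGL ((Equiv.prodUnique G Unit).trans e) M, blockGL_mem_glOver _ hM, fun f ↦ ?_⟩,
    fun g f hf ↦ ?_, fun f hf hff ↦ ?_⟩
  · rw [mem_lattice_blockGL, Subalgebra.mem_comap, hFM]
    exact ⟨fun h _ ↦ h, fun h ↦ h ()⟩
  · have := htranslate (e.symm g) _ hf
    rw [Subalgebra.mem_comap]
    convert this using 1
    ext h
    simp
  · refine (hidem _ hf (hff.map _)).imp (fun h ↦ hinj ?_) fun h ↦ hinj ?_
    · exact h.trans (map_zero _).symm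
    · exact h.trans (map_one _).symm

/-- The algebra of the functions `ψ ∘ f` with `f ∈ F`, where the homomorphism `ψ` maps the ground
field `E` onto the ground field `E'`. -/
def mapForm {ι : Type*} (ψ : K →+* L)
    (hψ : (⊥ : Subalgebra E K).toSubring.map ψ = (⊥ : Subalgebra E' L).toSubring)
    (F : Subalgebra E (ι → K)) : Subalgebra E' (ι → L) where
  __ := F.toSubsemiring.map (ψ.compLeft ι)
  algebraMap_mem' a := by
    have ha : algebraMap E' L a ∈ (⊥ : Subalgebra E K).toSubring.map ψ := by
      rw [hψ]
      exact (⊥ : Subalgebra E' L).algebraMap_mem a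
    obtain ⟨_, ⟨b, rfl⟩, hb⟩ := ha
    exact ⟨algebraMap E (ι → K) b, F.algebraMap_mem b, funext fun _ ↦ hb⟩

theorem HasGaloisForm.map {R : Subring K} {R' : Subring L} (ψ : K →+* L)
    (hψ : (⊥ : Subalgebra E K).toSubring.map ψ = (⊥ : Subalgebra E' L).toSubring)
    (hR : ∀ x ∈ R, ψ x ∈ R') : HasGaloisForm E R G → HasGaloisForm E' R' G := by
  rintro ⟨F, ⟨M, hM, hFM⟩, htranslate, hidem⟩
  refine ⟨mapForm ψ hψ F, ⟨GeneralLinearGroup.map ψ M, map_mem_glOver hR hM, fun f ↦ ?_⟩, ?_, ?_⟩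
  · rw [mem_lattice_map hψ]
    exact exists_congr fun f₀ ↦ and_congr_left fun _ ↦ hFM f₀
  · rintro g _ ⟨f, hf, rfl⟩
    exact ⟨_, htranslate g f hf, rfl⟩
  · rintro _ ⟨f, hf, rfl⟩ hff
    have hidem_f : IsIdempotentElem f := funext fun g ↦ ψ.injective <| by
      simpa using congrFun hff g
    refine (hidem f hf hidem_f).imp ?_ ?_ <;> rintro rfl
    exacts [map_zero (ψ.compLeft G), map_one (ψ.compLeft G)]

theorem mem_adjoin_iff_mem_lattice {ι : Type*} [Fintype ι] [DecidableEq ι] {M : GL ι K}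
    {F : Subalgebra E (ι → K)} (hF : ∀ f, f ∈ F ↔ f ∈ lattice (⊥ : Subalgebra E K) M)
    (P : Subalgebra E K) (f : ι → K) :
    f ∈ Algebra.adjoin P (F : Set (ι → K)) ↔ f ∈ lattice P M := by
  have hclosure : (Submonoid.closure (F : Set (ι → K)) : Set (ι → K)) = F :=
    congrArg SetLike.coe (Submonoid.closure_eq F.toSubmonoid)
  rw [← Subalgebra.mem_toSubmodule, Algebra.adjoin_eq_span, hclosure, lattice_eq_span,
    show (F : Set (ι → K)) = lattice (⊥ : Subalgebra E K) M from Set.ext hF]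

theorem IsGaloisForm.translate_mem_adjoin {R : Subring K} {F : Subalgebra E (G → K)}
    (hF : IsGaloisForm R F) (P : Subalgebra E K) (g : G) {f : G → K}
    (hf : f ∈ Algebra.adjoin P (F : Set (G → K))) :
    precomp P (g * ·) f ∈ Algebra.adjoin P (F : Set (G → K)) := by
  have hle : Algebra.adjoin P (F : Set (G → K)) ≤
      (Algebra.adjoin P (F : Set (G → K))).comap (precomp P (g * ·)) :=
    Algebra.adjoin_le fun f hf ↦ Algebra.subset_adjoin (hF.translate_mem g f hf)
  exact hle hf

end Forms

section Induction

open Matrix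

variable {E K G : Type*} [Field E] [Field K] [Algebra E K] [Group G] {R : Subring K}
  {P : Subalgebra E K} {H : Subgroup G} {F : Subalgebra E (H → K)}

/-- The algebra induced from a subgroup: the functions on `G` whose restrictions to all left cosets
of `H`, identified with `H` by a translation, lie in the `P`-span of `F`. -/
def inducedAlgebra (P : Subalgebra E K) (H : Subgroup G)
    (F : Subalgebra E (H → K)) : Subalgebra P (G → K) :=
  ⨅ g : G, (Algebra.adjoin P (F : Set (H → K))).comap (precomp P fun t : H ↦ g * t)

theorem mem_inducedAlgebra {f : G → K} : f ∈ inducedAlgebra P H F ↔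
      ∀ g : G, (fun t : H ↦ f (g * t)) ∈ Algebra.adjoin P (F : Set (H → K)) :=
  Algebra.mem_iInf

theorem translate_mem_inducedAlgebra {f : G → K} (hf : f ∈ inducedAlgebra P H F) (g : G) :
    precomp E (g * ·) f ∈ inducedAlgebra P H F := by
  rw [mem_inducedAlgebra] at hf ⊢
  intro g'
  simpa only [precomp_apply, mul_assoc] using hf (g * g')

theorem mem_lattice_bot_of_forall_mem {ι : Type*} [Fintype ι] [DecidableEq ι]
    (hRP : R ⊓ P.toSubring ≤ (⊥ : Subalgebra E K).toSubring) {M : GL ι K} (hM : M ∈ glOver ι R)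
    {f : ι → K} (hfR : ∀ i, f i ∈ R) (hf : f ∈ lattice P M) :
    f ∈ lattice (⊥ : Subalgebra E K) M :=
  fun i ↦ hRP ⟨mulVec_mem hM.2 hfR i, hf i⟩

theorem apply_eq_zero_or_one {X B : Type*} [MonoidWithZero B] [IsCancelMulZero B] {f : X → B}
    (hf : IsIdempotentElem f) (x : X) : f x = 0 ∨ f x = 1 :=
  IsIdempotentElem.iff_eq_zero_or_one.1 (show f x * f x = f x from congrFun hf x)

theorem eq_zero_or_one_of_apply_mul_eq {B : Type*} [MonoidWithZero B]
    [IsCancelMulZero B] {f : G → B} (hff : IsIdempotentElem f) {H₁ H₂ : Subgroup G}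
    (hH : H₁ ⊔ H₂ = ⊤) (h₁ : ∀ g, ∀ t ∈ H₁, f (g * t) = f g) (h₂ : ∀ g, ∀ t ∈ H₂, f (g * t) = f g) :
    f = 0 ∨ f = 1 := by
  have hmul (t : G) (ht : t ∈ H₁ ⊔ H₂) : ∀ g, f (g * t) = f g := by
    rw [Subgroup.sup_eq_closure] at ht
    induction ht using Subgroup.closure_induction with
    | mem t ht => exact fun g ↦ ht.elim (h₁ g t) (h₂ g t)
    | one => simp
    | mul s t _ _ hs ht => exact fun g ↦ by rw [← mul_assoc, ht, hs]
    | inv t _ ht => exact fun g ↦ by simpa using (ht (g * t⁻¹)).symm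
  have hconst (g : G) : f g = f 1 := by simpa using hmul g (hH ▸ Subgroup.mem_top g) 1
  exact (apply_eq_zero_or_one hff 1).imp (fun h ↦ funext fun g ↦ (hconst g).trans h)
    (fun h ↦ funext fun g ↦ (hconst g).trans h)

variable [Fintype H] [DecidableEq H]

theorem IsGaloisForm.exists_inducedAlgebra_eq_lattice [Fintype G] [DecidableEq G]
    (hF : IsGaloisForm R F) :
    ∃ B ∈ glOver G R, ∀ (P : Subalgebra E K) (f : G → K),
      f ∈ inducedAlgebra P H F ↔ f ∈ lattice P B := by
  classical
  obtain ⟨M, hM, hFM⟩ := hF.exists_lattice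
  obtain ⟨S, hS, -⟩ := H.exists_isComplement_left 1
  let e : H × S ≃ G := (Equiv.prodComm H S).trans hS.equiv.symm
  refine ⟨blockGL e M, blockGL_mem_glOver e hM, fun P f ↦ ?_⟩
  simp only [mem_lattice_blockGL, ← mem_adjoin_iff_mem_lattice hFM P, mem_inducedAlgebra]
  refine ⟨fun h s ↦ h s, fun h g ↦ ?_⟩
  obtain ⟨⟨t₀, s⟩, rfl⟩ := e.surjective g
  have hg (t : H) : e (t₀, s) * t = e (t₀ * t, s) := mul_assoc _ _ _
  simp only [hg]
  exact hF.translate_mem_adjoin P t₀ (h s)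

theorem IsGaloisForm.apply_mul_eq_of_isIdempotentElem (hF : IsGaloisForm R F)
    (hRP : R ⊓ P.toSubring ≤ (⊥ : Subalgebra E K).toSubring) {f : G → K}
    (hf : f ∈ inducedAlgebra P H F) (hff : IsIdempotentElem f) (g : G) {t : G} (ht : t ∈ H) :
    f (g * t) = f g := by
  obtain ⟨M, hM, hFM⟩ := hF.exists_lattice
  have hfR (x : G) : f x ∈ R := by
    rcases apply_eq_zero_or_one hff x with h | h <;> rw [h]
    exacts [R.zero_mem, R.one_mem]
  have hrestrict : (fun s : H ↦ f (g * s)) ∈ F :=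
    (hFM _).2 <| mem_lattice_bot_of_forall_mem hRP hM (fun s ↦ hfR _) <|
      (mem_adjoin_iff_mem_lattice hFM P _).1 (mem_inducedAlgebra.1 hf g)
  have hconst : f (g * t) = f (g * (1 : H)) := by
    rcases hF.eq_zero_or_one _ hrestrict (funext fun s ↦ congrFun hff _) with h | h <;>
      exact (congrFun h ⟨t, ht⟩).trans (congrFun h 1).symm
  simpa using hconst

/-- The required form is the intersection of the algebras induced to `G` over the complementary
enlargements `Pm` and `Pp` of the ground field; the factorization makes their bases coincide. -/
theorem HasGaloisForm.glue [Fintype G] [DecidableEq G] {Rp Rm R₀ : Subring K}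
    {Pp Pm : Subalgebra E K} (hRp₀ : Rp ≤ R₀) (hRm₀ : Rm ≤ R₀) (hRp : Rp ≤ Pp.toSubring)
    (hRm : Rm ≤ Pm.toSubring) (hP : Pp ⊓ Pm = ⊥)
    (hfactor : ∀ B ∈ glOver G R₀, ∃ Y ∈ glOver G Rp, ∃ X ∈ glOver G Pm.toSubring, B = Y * X)
    {H₁ H₂ : Subgroup G} [Fintype H₁] [Fintype H₂] [DecidableEq H₁] [DecidableEq H₂]
    (hH : H₁ ⊔ H₂ = ⊤) : HasGaloisForm E Rp H₁ → HasGaloisForm E Rm H₂ →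
      HasGaloisForm E R₀ G := by
  rintro ⟨F₁, hF₁⟩ ⟨F₂, hF₂⟩
  obtain ⟨B, hB, hF₁B⟩ := hF₁.exists_inducedAlgebra_eq_lattice
  obtain ⟨C, hC, hF₂C⟩ := hF₂.exists_inducedAlgebra_eq_lattice
  obtain ⟨Y, hY, X, hX, hYX⟩ := hfactor (C⁻¹ * B)
    (mul_mem (inv_mem (glOver_mono hRm₀ hC)) (glOver_mono hRp₀ hB))
  have hCY : C * Y = B * X⁻¹ := by
    rw [eq_mul_inv_iff_mul_eq, mul_assoc, ← hYX, mul_inv_cancel_left]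
  have hP' : Pp.toSubring ⊓ Pm.toSubring ≤ (⊥ : Subalgebra E K).toSubring := hP ▸ le_rfl
  refine ⟨(inducedAlgebra Pm H₁ F₁).restrictScalars E ⊓ (inducedAlgebra Pp H₂ F₂).restrictScalars E,
    ⟨C * Y, mul_mem (glOver_mono hRm₀ hC) (glOver_mono hRp₀ hY), fun f ↦ ?_⟩, ?_, ?_⟩
  · rw [← hP, mem_lattice_inf, lattice_mul_right Pp C (glOver_mono hRp hY), hCY,
      lattice_mul_right Pm B (inv_mem hX), ← hF₁B, ← hF₂C, and_comm]
    rfl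
  · exact fun g f hf ↦ ⟨translate_mem_inducedAlgebra hf.1 g, translate_mem_inducedAlgebra hf.2 g⟩
  · exact fun f hf hff ↦ eq_zero_or_one_of_apply_mul_eq hff hH
      (fun g t ↦ hF₁.apply_mul_eq_of_isIdempotentElem
        ((inf_le_inf_right _ hRp).trans hP') hf.1 hff g)
      (fun g t ↦ hF₂.apply_mul_eq_of_isIdempotentElem
        ((inf_comm _ _).trans_le ((inf_le_inf_left _ hRm).trans hP')) hf.2 hff g)

end Induction

section GaloisExtension

open Matrix

universe u v

theorem isField_of_isIdempotentElem_eq_zero_or_one {A : Type*} [CommRing A] [Nontrivial A]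
    [IsReduced A] [IsArtinianRing A] (h : ∀ e : A, IsIdempotentElem e → e = 0 ∨ e = 1) :
    IsField A where
  exists_pair_ne := exists_pair_ne A
  mul_comm := mul_comm
  mul_inv_cancel {a} ha := by
    obtain ⟨n, y, hy⟩ := IsArtinian.exists_pow_succ_smul_dvd a (1 : A)
    have hnil : (a * (a * y - 1)) ^ (n + 1) = 0 := by
      have : a ^ n * (a * y - 1) = 0 := by
        rw [smul_eq_mul, smul_eq_mul, mul_one, Nat.succ_eq_add_one, pow_succ] at hy
        linear_combination hy
      rw [mul_pow, pow_succ, pow_succ' (a * y - 1)]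
      linear_combination a * (a * y - 1) ^ n * this
    have hay : a * (a * y) = a := by
      linear_combination pow_eq_zero_iff n.succ_ne_zero |>.1 hnil
    have hidem : IsIdempotentElem (a * y) := by
      unfold IsIdempotentElem
      linear_combination y * hay
    refine ⟨y, (h _ hidem).resolve_left fun h0 ↦ ha ?_⟩
    rw [← hay, h0, mul_zero]

variable {E K G : Type*} [Field E] [Field K] [Algebra E K] [Group G] [Fintype G] [DecidableEq G]
  {R : Subring K} {F : Subalgebra E (G → K)}

theorem IsGaloisForm.finiteDimensional (hF : IsGaloisForm R F) : FiniteDimensional E F := by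
  obtain ⟨M, -, hFM⟩ := hF.exists_lattice
  have hle : Subalgebra.toSubmodule F ≤ Submodule.span E (Set.range M.val.col) :=
    fun f hf ↦ mem_lattice_bot_iff_mem_span.1 ((hFM f).1 hf)
  have := FiniteDimensional.span_of_finite E (Set.finite_range M.val.col)
  exact Submodule.finiteDimensional_of_le hle

theorem IsGaloisForm.isField (hF : IsGaloisForm R F) : IsField F := by
  have := hF.finiteDimensional
  have := IsArtinianRing.of_finite E F
  have : IsReduced F := isReduced_of_injective F.val Subtype.val_injective
  refine isField_of_isIdempotentElem_eq_zero_or_one fun e he ↦ ?_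
  exact (hF.eq_zero_or_one e e.2 (congrArg Subtype.val he)).imp Subtype.ext Subtype.ext

theorem IsGaloisForm.exists_algebraMap_eq_of_const_mem (hF : IsGaloisForm R F) {c : K}
    (hc : Function.const G c ∈ F) : ∃ a, algebraMap E K a = c := by
  obtain ⟨M, -, hFM⟩ := hF.exists_lattice
  have hconst : M⁻¹.val *ᵥ Function.const G c = c • M⁻¹.val *ᵥ 1 := by
    rw [← mulVec_smul]
    congr 1
    ext
    simp
  have hne : M⁻¹.val *ᵥ 1 ≠ 0 := fun h ↦ one_ne_zero (α := G → K) <| by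
    rw [← sum_smul_col M 1, h]
    simp
  obtain ⟨j, hj⟩ := Function.ne_iff.1 hne
  obtain ⟨a, ha⟩ := (hFM 1).1 F.one_mem j
  obtain ⟨b, hb⟩ := (hFM _).1 hc j
  rw [hconst, Pi.smul_apply, smul_eq_mul] at hb
  refine ⟨b / a, ?_⟩
  rw [map_div₀]
  exact (div_eq_iff (ha ▸ hj)).2 (hb.trans (congrArg _ ha.symm))

/-- The group `G` acts on a Galois form by left translations. -/
abbrev IsGaloisForm.mulSemiringAction (hF : IsGaloisForm R F) : MulSemiringAction G F where
  smul g f := ⟨precomp E (g⁻¹ * ·) f.1, hF.translate_mem g⁻¹ f f.2⟩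
  one_smul f := Subtype.ext <| funext fun h ↦ by simp [HSMul.hSMul]
  mul_smul g g' f := Subtype.ext <| funext fun h ↦ by simp [HSMul.hSMul, mul_assoc]
  smul_zero _ := rfl
  smul_add _ _ _ := rfl
  smul_one _ := rfl
  smul_mul _ _ _ := rfl

theorem IsGaloisForm.isGaloisGroup (hF : IsGaloisForm R F) :
    letI := hF.mulSemiringAction
    IsGaloisGroup G E F := by
  let _ := hF.mulSemiringAction
  have smul_apply (g : G) (f : F) (h : G) : (g • f).1 h = f.1 (g⁻¹ * h) := rfl
  obtain ⟨M, -, hFM⟩ := hF.exists_lattice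
  refine ⟨⟨fun {g g'} hgg' ↦ ?_⟩, ⟨fun g a f ↦ rfl⟩, ⟨fun f hf ↦ ?_⟩⟩
  · have hrow : M.val g⁻¹ = M.val g'⁻¹ := funext fun k ↦ by
      simpa [smul_apply] using
        congrFun (congrArg Subtype.val (hgg' ⟨_, (hFM _).2 (col_mem_lattice ⊥ M k)⟩)) 1
    have hone : (1 : Matrix G G K) g⁻¹ = (1 : Matrix G G K) g'⁻¹ := by
      rw [← Units.mul_inv M]
      funext k
      simp only [mul_apply, hrow]
    by_contra hne
    simpa [one_apply, Ne.symm hne] using congrFun hone g⁻¹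
  · have hconst : f.1 = Function.const G (f.1 1) := funext fun g ↦ by
      simpa [smul_apply] using (congrFun (congrArg Subtype.val (hf g)) g).symm
    obtain ⟨a, ha⟩ := hF.exists_algebraMap_eq_of_const_mem (hconst ▸ f.2)
    exact ⟨a, Subtype.ext (by rw [hconst, ← ha]; rfl)⟩

theorem HasGaloisForm.exists_isGalois {E : Type*} {K : Type u} {G : Type v} [Field E] [Field K]
    [Algebra E K] [Group G] [Fintype G] [DecidableEq G] {R : Subring K} : HasGaloisForm E R G →
    ∃ (N : Type (max u v)) (_ : Field N) (_ : Algebra E N),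
      FiniteDimensional E N ∧ IsGalois E N ∧ Nonempty ((N ≃ₐ[E] N) ≃* G) := by
  rintro ⟨F, hF⟩
  let _ : Field F := hF.isField.toField
  let _ := hF.mulSemiringAction
  have := hF.isGaloisGroup
  have : FaithfulSMul E F :=
    (faithfulSMul_iff_algebraMap_injective E F).2 (algebraMap E F).injective
  exact ⟨F, inferInstance, inferInstance, hF.finiteDimensional, IsGaloisGroup.isGalois G E F,
    ⟨(IsGaloisGroup.mulEquivAlgEquiv G E F).symm⟩⟩

end GaloisExtension

section Generation

variable {E K : Type*} [Field E] [Field K] [Algebra E K] {R : Subring K}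

theorem iSup_zpowers_eq_top {G : Type*} [Group G] : ⨆ g : G, Subgroup.zpowers g = ⊤ :=
  (Subgroup.eq_top_iff' _).2 fun g ↦
    (le_iSup Subgroup.zpowers g) (Subgroup.mem_zpowers g)

theorem HasGaloisForm.of_cyclic_of_sup {G : Type*} [Group G] [Fintype G] [DecidableEq G]
    (hcyclic : ∀ (C : Subgroup G) [Fintype C] [DecidableEq C] [IsCyclic C], HasGaloisForm E R C)
    (hsup : ∀ (J : Subgroup G) [Fintype J] [DecidableEq J] (H₁ H₂ : Subgroup J) [Fintype H₁]
      [Fintype H₂] [DecidableEq H₁] [DecidableEq H₂], H₁ ⊔ H₂ = ⊤ →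
      HasGaloisForm E R H₁ → HasGaloisForm E R H₂ → HasGaloisForm E R J) :
    HasGaloisForm E R G := by
  classical
  let p (H : Subgroup G) : Prop := ∀ [Fintype H] [DecidableEq H], HasGaloisForm E R H
  suffices h : p (Finset.univ.sup Subgroup.zpowers) by
    have htop : Finset.univ.sup Subgroup.zpowers = (⊤ : Subgroup G) := by
      rw [Finset.sup_univ_eq_iSup, iSup_zpowers_eq_top]
    rw [htop] at h
    exact h.of_mulEquiv Subgroup.topEquiv
  refine Finset.sup_induction (p := p) (hcyclic ⊥) (fun H₁ h₁ H₂ h₂ ↦ ?_) fun g _ ↦ hcyclic _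
  refine hsup (H₁ ⊔ H₂) (H₁.subgroupOf _) (H₂.subgroupOf _) ?_
    (h₁.of_mulEquiv (Subgroup.subgroupOfEquivOfLe le_sup_left).symm)
    (h₂.of_mulEquiv (Subgroup.subgroupOfEquivOfLe le_sup_right).symm)
  rw [← Subgroup.subgroupOf_sup le_sup_left le_sup_right, Subgroup.subgroupOf_self]

end Generation

section Kummer

open Matrix

variable {k E K : Type*} [Field k] [Field E] [Field K] [Algebra E K] [Algebra k K] {n : ℕ}

/-- The diagonal matrix with given invertible entries. -/
def diagonalGL {ι : Type*} [Fintype ι] [DecidableEq ι] : (ι → Kˣ) →* GL ι K :=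
  (Units.map (diagonalRingHom ι K).toMonoidHom).comp MulEquiv.piUnits.symm.toMonoidHom

theorem diagonalGL_val {ι : Type*} [Fintype ι] [DecidableEq ι] (d : ι → Kˣ) :
    (diagonalGL d).val = diagonal fun i ↦ (d i : K) :=
  rfl

theorem diagonalGL_mem_glOver {ι : Type*} [Fintype ι] [DecidableEq ι] {R : Subring K} {d : ι → Kˣ}
    (hd : ∀ i, (d i : K) ∈ R) (hd' : ∀ i, ((d i)⁻¹ : K) ∈ R) : diagonalGL d ∈ glOver ι R := by
  have hentry {d : ι → Kˣ} (hd : ∀ i, (d i : K) ∈ R) (i j : ι) : (diagonalGL d).val i j ∈ R := by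
    rw [diagonalGL_val, diagonal_apply]
    split_ifs
    exacts [hd i, R.zero_mem]
  refine mem_glOver.2 ⟨hentry hd, map_inv (diagonalGL (K := K)) d ▸ hentry fun i ↦ ?_⟩
  simpa using hd' i

/-- The matrix whose `i`-th row consists of the powers of `ζ i * y`, where the `ζ i` are distinct
elements of the constant field `k`. In the Kummer extension generated by `y`, the `ζ i * y` are the
conjugates of `y`. -/
def kummerGL (ζ : Fin n ↪ k) (y : Kˣ) : GL (Fin n) K :=
  GeneralLinearGroup.map (algebraMap k K)
    (GeneralLinearGroup.mkOfDetNeZero (vandermonde ζ) (det_vandermonde_ne_zero_iff.2 ζ.injective)) *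
  diagonalGL fun j : Fin n ↦ y ^ (j : ℕ)

theorem kummerGL_apply (ζ : Fin n ↪ k) (y : Kˣ) (i j : Fin n) :
    (kummerGL ζ y).val i j = (algebraMap k K (ζ i) * y) ^ (j : ℕ) := by
  simp [kummerGL, diagonalGL_val, GeneralLinearGroup.mkOfDetNeZero, vandermonde_apply, mul_pow]

theorem kummerGL_mem_glOver {R : Subring K} (hk : ∀ a, algebraMap k K a ∈ R) (ζ : Fin n ↪ k)
    {y : Kˣ} (hy : (y : K) ∈ R) (hy' : (y : K)⁻¹ ∈ R) : kummerGL ζ y ∈ glOver (Fin n) R := by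
  refine mul_mem ⟨fun i j ↦ hk _, fun i j ↦ hk _⟩ (diagonalGL_mem_glOver (fun j ↦ ?_) fun j ↦ ?_)
  · simpa using R.pow_mem hy j
  · simpa using R.pow_mem hy' j

theorem eq_of_mem_lattice_kummerGL [Algebra k E] [IsScalarTower k E K] {ζ : Fin n ↪ k} {y : Kˣ}
    (hy : ∀ j : ℕ, 0 < j → j < n → (y : K) ^ j ∉ (⊥ : Subalgebra E K)) {f : Fin n → k}
    (hf : algebraMap k K ∘ f ∈ lattice (⊥ : Subalgebra E K) (kummerGL ζ y)) (i j : Fin n) :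
    f i = f j := by
  set V := GeneralLinearGroup.mkOfDetNeZero (vandermonde ζ) (det_vandermonde_ne_zero_iff.2
    ζ.injective) with hV
  set c := V⁻¹.val *ᵥ f with hc
  have hcoord (l : Fin n) : ((kummerGL ζ y)⁻¹.val *ᵥ algebraMap k K ∘ f) l =
      ((y : K) ^ (l : ℕ))⁻¹ * algebraMap k K (c l) := by
    have hVf : (GeneralLinearGroup.map (algebraMap k K) V)⁻¹.val *ᵥ (algebraMap k K ∘ f) =
        algebraMap k K ∘ c :=
      funext fun i ↦ (RingHom.map_mulVec (algebraMap k K) V⁻¹.val f i).symm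
    rw [kummerGL, _root_.mul_inv_rev, Units.val_mul, ← mulVec_mulVec, ← hV, hVf, ← map_inv,
      diagonalGL_val, mulVec_diagonal]
    simp
  have hc0 (l : Fin n) (hl : 0 < (l : ℕ)) : c l = 0 := by
    by_contra hcl
    refine hy l hl l.2 ?_
    obtain ⟨a, ha⟩ := hcoord l ▸ hf l
    have hne : algebraMap k K (c l) ≠ 0 := (map_ne_zero _).2 hcl
    have ha' : algebraMap E K a = ((y : K) ^ (l : ℕ))⁻¹ * algebraMap k K (c l) := ha
    refine ⟨algebraMap k E (c l) / a, ?_⟩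
    change algebraMap E K _ = _
    rw [map_div₀, ← IsScalarTower.algebraMap_apply, ha', div_mul_cancel_right₀ hne, inv_inv]
  have hfc (i : Fin n) : f i = c ⟨0, i.pos⟩ := by
    have hf' : f = V.val *ᵥ c := by rw [hc, mulVec_mulVec, Units.mul_inv, one_mulVec]
    have hVi (l : Fin n) : V.val i l = ζ i ^ (l : ℕ) := rfl
    rw [congrFun hf' i, mulVec, dotProduct, Finset.sum_eq_single ⟨0, i.pos⟩, hVi, pow_zero, one_mul]
    · intro l _ hl
      rw [hc0 l (Nat.pos_of_ne_zero fun h ↦ hl (Fin.ext h)), mul_zero]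
    · exact fun h ↦ absurd (Finset.mem_univ _) h
  rw [hfc i, hfc j]

variable {G : Type*} [Group G]

/-- The family of conjugates of a Kummer generator `y` on which `G` acts through the
character `χ`. -/
def kummerFun (χ : G →* k) (y : K) (g : G) : K :=
  algebraMap k K (χ g) * y

theorem precomp_kummerFun [Algebra k E] [IsScalarTower k E K] (χ : G →* k) (y : K) (g : G) :
    precomp E (g * ·) (kummerFun χ y) = algebraMap k E (χ g) • kummerFun χ y := by
  ext h
  rw [precomp_apply, Pi.smul_apply, algebraMap_smul, Algebra.smul_def, kummerFun, kummerFun,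
    map_mul, map_mul, mul_assoc]

variable [Fintype G]

theorem kummerFun_pow_card (χ : G →* k) (y : K) :
    kummerFun χ y ^ Fintype.card G = Function.const G (y ^ Fintype.card G) := by
  ext g
  rw [Pi.pow_apply, kummerFun, mul_pow, ← map_pow, ← map_pow, pow_card_eq_one, map_one, map_one,
    one_mul, Function.const_apply]

theorem mem_adjoin_kummerFun_iff (e : Fin (Fintype.card G) ≃ G) {χ : G →* k}
    (hχ : Function.Injective χ) {y : Kˣ} (hy : (y : K) ^ Fintype.card G ∈ (⊥ : Subalgebra E K))
    {f : G → K} : f ∈ Algebra.adjoin E {kummerFun χ (y : K)} ↔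
      f ∘ e ∈ lattice (⊥ : Subalgebra E K) (kummerGL (e.toEmbedding.trans ⟨χ, hχ⟩) y) := by
  let _ : DecidableEq (G → K) := fun _ _ ↦ Classical.propDecidable _
  obtain ⟨c, hc⟩ := hy
  have hroot :
      (Polynomial.X ^ Fintype.card G - Polynomial.C c).aeval (kummerFun χ (y : K)) = 0 := by
    rw [map_sub, map_pow, Polynomial.aeval_X, Polynomial.aeval_C, kummerFun_pow_card, sub_eq_zero,
      ← hc]
    rfl
  have hcols : Set.range (kummerGL (e.toEmbedding.trans ⟨χ, hχ⟩) y).val.col =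
      LinearEquiv.funCongrLeft E K e ''
        ((kummerFun χ (y : K) ^ ·) '' Finset.range (Fintype.card G)) := by
    have hcol (l : Fin (Fintype.card G)) :
        (kummerGL (e.toEmbedding.trans ⟨χ, hχ⟩) y).val.col l =
          LinearEquiv.funCongrLeft E K e (kummerFun χ (y : K) ^ (l : ℕ)) :=
      funext fun i ↦ kummerGL_apply _ y i l
    rw [← Set.image_comp, Finset.coe_range, ← Fin.range_val, ← Set.range_comp]
    exact congrArg Set.range (funext hcol)
  rw [mem_lattice_bot_iff_mem_span, hcols, ← LinearEquiv.coe_coe, Submodule.span_image,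
    ← Subalgebra.mem_toSubmodule, ← Submodule.span_range_natDegree_eq_adjoin
      (Polynomial.monic_X_pow_sub_C c Fintype.card_ne_zero) hroot, Polynomial.natDegree_X_pow_sub_C,
    Finset.coe_image]
  change _ ↔ LinearEquiv.funCongrLeft E K e f ∈ _
  rw [Submodule.mem_map_equiv, LinearEquiv.symm_apply_apply]

theorem HasGaloisForm.of_kummer [Algebra k E] [IsScalarTower k E K] [DecidableEq G] {R : Subring K}
    (hk : ∀ a, algebraMap k K a ∈ R) {χ : G →* k} (hχ : Function.Injective χ) {y : Kˣ}
    (hyR : (y : K) ∈ R) (hyR' : (y : K)⁻¹ ∈ R)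
    (hyE : (y : K) ^ Fintype.card G ∈ (⊥ : Subalgebra E K))
    (hy : ∀ j : ℕ, 0 < j → j < Fintype.card G → (y : K) ^ j ∉ (⊥ : Subalgebra E K)) :
    HasGaloisForm E R G := by
  have e := (Fintype.equivFin G).symm
  refine ⟨Algebra.adjoin E {kummerFun χ (y : K)}, ⟨blockGL ((Equiv.prodUnique _ Unit).trans e)
    (kummerGL (e.toEmbedding.trans ⟨χ, hχ⟩) y), blockGL_mem_glOver _
    (kummerGL_mem_glOver hk _ hyR hyR'), fun f ↦ ?_⟩, fun g f hf ↦ ?_, fun f hf hff ↦ ?_⟩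
  · rw [mem_lattice_blockGL, mem_adjoin_kummerFun_iff e hχ hyE]
    exact ⟨fun h _ ↦ h, fun h ↦ h ()⟩
  · have hle : Algebra.adjoin E {kummerFun χ (y : K)} ≤
        (Algebra.adjoin E {kummerFun χ (y : K)}).comap (precomp E (g * ·)) := by
      refine Algebra.adjoin_singleton_le ?_
      rw [Subalgebra.mem_comap, precomp_kummerFun]
      exact Subalgebra.smul_mem _ (Algebra.self_mem_adjoin_singleton _ _) _
    exact hle hf
  · have hfk (g : G) : ∃ a : k, algebraMap k K a = f g :=
      (apply_eq_zero_or_one hff g).elim (fun h ↦ ⟨0, by rw [h, map_zero]⟩)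
        fun h ↦ ⟨1, by rw [h, map_one]⟩
    choose f₀ hf₀ using hfk
    obtain rfl : algebraMap k K ∘ f₀ = f := funext hf₀
    have hconst (g : G) : f₀ g = f₀ 1 := by
      simpa using eq_of_mem_lattice_kummerGL (f := f₀ ∘ e) hy
        ((mem_adjoin_kummerFun_iff e hχ hyE).1 hf) (e.symm g) (e.symm 1)
    exact (apply_eq_zero_or_one hff 1).imp (fun h ↦ funext fun g ↦ (congrArg _ (hconst g)).trans h)
      fun h ↦ funext fun g ↦ (congrArg _ (hconst g)).trans h

end Kummer

section Wiener

theorem exists_unit_one_add_mem {A : Type*} [NormedRing A] [CompleteSpace A] {S : Subring A}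
    (hS : IsClosed (S : Set A)) {x : A} (hx : x ∈ S) (hx' : ‖x‖ < 1) :
    ∃ u : Aˣ, u.val = 1 + x ∧ u⁻¹.val ∈ S ∧ ‖u⁻¹.val‖ ≤ ‖(1 : A)‖ - 1 + (1 - ‖x‖)⁻¹ := by
  rw [← norm_neg x] at hx' ⊢
  refine ⟨Units.oneSub (-x) hx', sub_neg_eq_add 1 x, ?_, tsum_geometric_le_of_norm_lt_one _ hx'⟩
  exact hS.mem_of_tendsto (summable_geometric_of_norm_lt_one hx').hasSum
    (.of_forall fun s ↦ S.sum_mem fun n _ ↦ S.pow_mem (S.neg_mem hx) n)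

/-- The weight of the exponent `n` in the norm `∑ |cₙ| 2^|n|` on Laurent polynomials `∑ cₙ Tⁿ`; this
choice makes Laurent series of finite norm converge on the annulus `1/2 ≤ |z| ≤ 2`. -/
def weight (n : ℤ) : ℝ := 2 ^ n.natAbs

theorem one_le_weight (n : ℤ) : 1 ≤ weight n := one_le_pow₀ one_le_two

theorem weight_pos (n : ℤ) : 0 < weight n := zero_lt_one.trans_le (one_le_weight n)

theorem weight_add_le (m n : ℤ) : weight (m + n) ≤ weight m * weight n := by
  rw [weight, weight, weight, ← pow_add]
  exact pow_le_pow_right₀ one_le_two (Int.natAbs_add_le m n)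

noncomputable local instance : Norm (LaurentPolynomial ℂ) where
  norm p := p.coeff.sum fun n c ↦ ‖c‖ * weight n

theorem laurent_norm_eq_sum {p : LaurentPolynomial ℂ} {s : Finset ℤ} (hs : p.coeff.support ⊆ s) :
    ‖p‖ = ∑ n ∈ s, ‖p.coeff n‖ * weight n :=
  Finsupp.sum_of_support_subset _ hs _ (by simp)

theorem laurent_norm_single (n : ℤ) (c : ℂ) :
    ‖(AddMonoidAlgebra.single n c : LaurentPolynomial ℂ)‖ = ‖c‖ * weight n :=
  Finsupp.sum_single_index (by simp)

theorem laurent_seminormCore : SeminormedSpace.Core ℂ (LaurentPolynomial ℂ) where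
  norm_nonneg p := Finset.sum_nonneg fun n _ ↦ mul_nonneg (norm_nonneg _) (weight_pos n).le
  norm_smul c p := by
    rw [laurent_norm_eq_sum (p := c • p) (s := p.coeff.support) Finsupp.support_smul,
      laurent_norm_eq_sum subset_rfl, Finset.mul_sum]
    simp only [AddMonoidAlgebra.coeff_smul, Finsupp.smul_apply, norm_smul, mul_assoc]
  norm_triangle p q := by
    classical
    rw [laurent_norm_eq_sum (p := p + q) (s := p.coeff.support ∪ q.coeff.support)
      Finsupp.support_add, laurent_norm_eq_sum Finset.subset_union_left,
      laurent_norm_eq_sum Finset.subset_union_right, ← Finset.sum_add_distrib]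
    refine Finset.sum_le_sum fun n _ ↦ ?_
    rw [← add_mul]
    exact mul_le_mul_of_nonneg_right (norm_add_le _ _) (weight_pos n).le

noncomputable local instance : SeminormedAddCommGroup (LaurentPolynomial ℂ) :=
  SeminormedAddCommGroup.ofCore laurent_seminormCore

theorem laurent_norm_mul_le (p q : LaurentPolynomial ℂ) : ‖p * q‖ ≤ ‖p‖ * ‖q‖ := by
  rw [AddMonoidAlgebra.mul_def, laurent_norm_eq_sum (p := p) subset_rfl,
    laurent_norm_eq_sum (p := q) subset_rfl, Finset.sum_mul]
  refine norm_sum_le_of_le _ fun m _ ↦ ?_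
  rw [Finset.mul_sum]
  refine norm_sum_le_of_le _ fun n _ ↦ ?_
  calc ‖(AddMonoidAlgebra.single (m + n) (p.coeff m * q.coeff n) : LaurentPolynomial ℂ)‖
      = ‖p.coeff m‖ * ‖q.coeff n‖ * weight (m + n) := by rw [laurent_norm_single, norm_mul]
    _ ≤ ‖p.coeff m‖ * ‖q.coeff n‖ * (weight m * weight n) := by
      gcongr
      exact weight_add_le m n
    _ = ‖p.coeff m‖ * weight m * (‖q.coeff n‖ * weight n) := mul_mul_mul_comm _ _ _ _

noncomputable local instance : SeminormedCommRing (LaurentPolynomial ℂ) where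
  __ : SeminormedAddCommGroup (LaurentPolynomial ℂ) := inferInstance
  __ : CommRing (LaurentPolynomial ℂ) := inferInstance
  norm_mul_le := laurent_norm_mul_le

noncomputable local instance : NormedAlgebra ℂ (LaurentPolynomial ℂ) where
  norm_smul_le c p := (laurent_seminormCore.norm_smul c p).le

/-- The weighted Wiener algebra of the Laurent series `∑ cₙ Tⁿ` with `∑ |cₙ| 2^|n| < ∞`, constructed
as the completion of the algebra of Laurent polynomials. -/
def WienerAlgebra : Type := UniformSpace.Completion (LaurentPolynomial ℂ)

namespace WienerAlgebra

noncomputable instance : NormedCommRing WienerAlgebra :=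
  inferInstanceAs (NormedCommRing (UniformSpace.Completion (LaurentPolynomial ℂ)))

noncomputable instance : NormedAlgebra ℂ WienerAlgebra :=
  inferInstanceAs (NormedAlgebra ℂ (UniformSpace.Completion (LaurentPolynomial ℂ)))

instance : CompleteSpace WienerAlgebra :=
  inferInstanceAs (CompleteSpace (UniformSpace.Completion (LaurentPolynomial ℂ)))

/-- The isometric embedding of the Laurent polynomials into the Wiener algebra. -/
noncomputable def ofLaurent : LaurentPolynomial ℂ →ₗᵢ[ℂ] WienerAlgebra :=
  UniformSpace.Completion.toComplₗᵢ

theorem denseRange_ofLaurent : DenseRange ofLaurent := UniformSpace.Completion.denseRange_coe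

/-- The powers of the variable. -/
noncomputable def T (n : ℤ) : WienerAlgebra := ofLaurent (LaurentPolynomial.T n)

theorem T_add (m n : ℤ) : T (m + n) = T m * T n := by
  rw [T, LaurentPolynomial.T_add]
  exact UniformSpace.Completion.coe_mul _ _

theorem T_zero : T 0 = 1 := UniformSpace.Completion.coe_one _

theorem norm_T (n : ℤ) : ‖T n‖ = weight n := by
  rw [T, ofLaurent.norm_map, LaurentPolynomial.T, laurent_norm_single, norm_one, one_mul]

instance : NormOneClass WienerAlgebra :=
  ⟨by rw [← T_zero, norm_T, weight, Int.natAbs_zero, pow_zero]⟩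

theorem ofLaurent_eq_sum (p : LaurentPolynomial ℂ) :
    ofLaurent p = p.coeff.sum fun n c ↦ c • T n := by
  conv_lhs => rw [← AddMonoidAlgebra.sum_coeff_single p]
  simp only [Finsupp.sum, map_sum, T, ← map_smul, LaurentPolynomial.T,
    AddMonoidAlgebra.smul_single', mul_one]

theorem mem_of_forall_T_mem {S : Submodule ℂ WienerAlgebra} (hS : IsClosed (S : Set WienerAlgebra))
    (hT : ∀ n, T n ∈ S) (f : WienerAlgebra) : f ∈ S := by
  refine denseRange_ofLaurent.induction_on (p := (· ∈ S)) f hS fun p ↦ ?_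
  rw [ofLaurent_eq_sum]
  exact S.sum_mem fun n _ ↦ S.smul_mem _ (hT n)

section Lift

variable {V : Type*} [NormedAddCommGroup V] [NormedSpace ℂ V]

theorem continuousLinearMap_ext {φ ψ : WienerAlgebra →L[ℂ] V} (h : ∀ n, φ (T n) = ψ (T n)) :
    φ = ψ :=
  ContinuousLinearMap.ext <| mem_of_forall_T_mem
    (S := LinearMap.eqLocus (φ : WienerAlgebra →ₗ[ℂ] V) (ψ : WienerAlgebra →ₗ[ℂ] V))
    (isClosed_eq φ.continuous ψ.continuous) h

theorem norm_linearCombination_le {a : ℤ → V} (ha : ∀ n, ‖a n‖ ≤ weight n)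
    (p : LaurentPolynomial ℂ) : ‖Finsupp.linearCombination ℂ a p.coeff‖ ≤ 1 * ‖ofLaurent p‖ := by
  rw [one_mul, ofLaurent.norm_map]
  refine norm_sum_le_of_le _ fun n _ ↦ (norm_smul (p.coeff n) (a n)).trans_le ?_
  exact mul_le_mul_of_nonneg_left (ha n) (norm_nonneg _)

variable [CompleteSpace V]

/-- The continuous linear map sending `T n` to `a n`; it is meaningful if `‖a n‖ ≤ weight n`. -/
noncomputable def lift (a : ℤ → V) : WienerAlgebra →L[ℂ] V :=
  (Finsupp.linearCombination ℂ a ∘ₗ (AddMonoidAlgebra.coeffLinearEquiv ℂ).toLinearMap).extendOfNorm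
    ofLaurent.toLinearMap

theorem lift_T {a : ℤ → V} (ha : ∀ n, ‖a n‖ ≤ weight n) (n : ℤ) : lift a (T n) = a n := by
  refine (LinearMap.extendOfNorm_eq denseRange_ofLaurent ⟨1, norm_linearCombination_le ha⟩
    (LaurentPolynomial.T n)).trans ?_
  change Finsupp.linearCombination ℂ a (Finsupp.single n 1) = a n
  rw [Finsupp.linearCombination_single, one_smul]

theorem norm_lift_le {a : ℤ → V} (ha : ∀ n, ‖a n‖ ≤ weight n) (f : WienerAlgebra) :
    ‖lift a f‖ ≤ ‖f‖ :=
  (LinearMap.norm_extendOfNorm_apply_le denseRange_ofLaurent 1 (norm_linearCombination_le ha)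
    f).trans_eq (one_mul _)

end Lift

section AlgLift

variable {B : Type*} [NormedCommRing B] [NormOneClass B] {u : Bˣ}

theorem norm_zpow_le_weight (hu : ‖(u : B)‖ ≤ 2) (hu' : ‖((u⁻¹ : Bˣ) : B)‖ ≤ 2) (n : ℤ) :
    ‖((u ^ n : Bˣ) : B)‖ ≤ weight n := by
  have hpow {v : Bˣ} (hv : ‖(v : B)‖ ≤ 2) (k : ℕ) : ‖((v ^ k : Bˣ) : B)‖ ≤ 2 ^ k := by
    rw [Units.val_pow_eq_pow_val]
    exact (norm_pow_le _ k).trans (pow_le_pow_left₀ (norm_nonneg _) hv k)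
  obtain ⟨k, rfl | rfl⟩ := n.eq_nat_or_neg
  · simpa [weight] using hpow hu k
  · simpa [weight] using hpow hu' k

variable [NormedAlgebra ℂ B] [CompleteSpace B]

theorem lift_zpow_mul (hu : ‖(u : B)‖ ≤ 2) (hu' : ‖((u⁻¹ : Bˣ) : B)‖ ≤ 2) (f g : WienerAlgebra) :
    lift (fun n ↦ ((u ^ n : Bˣ) : B)) (f * g) =
      lift (fun n ↦ ((u ^ n : Bˣ) : B)) f * lift (fun n ↦ ((u ^ n : Bˣ) : B)) g := by
  set φ := lift fun n ↦ ((u ^ n : Bˣ) : B)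
  have hφ : ∀ n, φ (T n) = ((u ^ n : Bˣ) : B) := lift_T (norm_zpow_le_weight hu hu')
  have hmonomial (m : ℤ) : φ ∘L ContinuousLinearMap.mul ℂ _ (T m) =
      ContinuousLinearMap.mul ℂ B (φ (T m)) ∘L φ :=
    continuousLinearMap_ext fun n ↦ by
      simp only [ContinuousLinearMap.comp_apply, ContinuousLinearMap.mul_apply', ← T_add, hφ,
        zpow_add, Units.val_mul]
  have hmul : φ ∘L (ContinuousLinearMap.mul ℂ _).flip g =
      (ContinuousLinearMap.mul ℂ B).flip (φ g) ∘L φ :=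
    continuousLinearMap_ext fun m ↦ DFunLike.congr_fun (hmonomial m) g
  exact DFunLike.congr_fun hmul f

/-- The continuous algebra homomorphism sending the variable to the unit `u`, where `u` and its
inverse have norm at most `2`. -/
noncomputable def algLift (u : Bˣ) (hu : ‖(u : B)‖ ≤ 2) (hu' : ‖((u⁻¹ : Bˣ) : B)‖ ≤ 2) :
    WienerAlgebra →A[ℂ] B where
  __ := AlgHom.ofLinearMap (lift fun n ↦ ((u ^ n : Bˣ) : B)).toLinearMap
    (by simpa [T_zero] using lift_T (norm_zpow_le_weight hu hu') 0) (lift_zpow_mul hu hu')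
  cont := (lift fun n ↦ ((u ^ n : Bˣ) : B)).cont

theorem algLift_T (hu : ‖(u : B)‖ ≤ 2) (hu' : ‖((u⁻¹ : Bˣ) : B)‖ ≤ 2) (n : ℤ) :
    algLift u hu hu' (T n) = ((u ^ n : Bˣ) : B) :=
  lift_T (norm_zpow_le_weight hu hu') n

end AlgLift

section Coeff

/-- The `n`-th coefficient. -/
noncomputable def coeff (n : ℤ) : WienerAlgebra →L[ℂ] ℂ := lift fun m ↦ if m = n then 1 else 0

theorem coeff_T (n m : ℤ) : coeff n (T m) = if m = n then 1 else 0 := by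
  refine lift_T (a := fun m ↦ if m = n then (1 : ℂ) else 0) (fun m ↦ ?_) m
  split_ifs
  · exact norm_one.trans_le (one_le_weight m)
  · exact norm_zero.trans_le (weight_pos m).le

theorem coeff_ofLaurent (n : ℤ) (p : LaurentPolynomial ℂ) : coeff n (ofLaurent p) = p.coeff n := by
  simp only [ofLaurent_eq_sum, Finsupp.sum, map_sum, map_smul, coeff_T, smul_eq_mul, mul_ite,
    mul_one, mul_zero, Finset.sum_ite_eq', Finsupp.mem_support_iff, ne_eq, ite_not]
  exact ite_eq_right_iff.2 Eq.symm

theorem sum_norm_coeff_le (s : Finset ℤ) (f : WienerAlgebra) :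
    ∑ n ∈ s, ‖coeff n f‖ * weight n ≤ ‖f‖ := by
  refine denseRange_ofLaurent.induction_on (p := fun f ↦ ∑ n ∈ s, ‖coeff n f‖ * weight n ≤ ‖f‖) f
    (isClosed_le (by fun_prop) continuous_norm) fun p ↦ ?_
  simp only [coeff_ofLaurent]
  rw [ofLaurent.norm_map, laurent_norm_eq_sum (s := s ∪ p.coeff.support) Finset.subset_union_right]
  exact Finset.sum_le_sum_of_subset_of_nonneg Finset.subset_union_left
    fun n _ _ ↦ mul_nonneg (norm_nonneg _) (weight_pos n).le

theorem summable_norm_coeff (f : WienerAlgebra) : Summable fun n ↦ ‖coeff n f‖ * weight n :=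
  summable_of_sum_le (fun n ↦ mul_nonneg (norm_nonneg _) (weight_pos n).le)
    fun s ↦ sum_norm_coeff_le s f

theorem summable_coeff_smul_T (f : WienerAlgebra) : Summable fun n ↦ coeff n f • T n := by
  refine .of_norm ?_
  simpa only [norm_smul, norm_T] using summable_norm_coeff f

theorem tsum_coeff_smul_T (f : WienerAlgebra) : ∑' n, coeff n f • T n = f := by
  let φ : WienerAlgebra →ₗ[ℂ] WienerAlgebra :=
    { toFun := fun f ↦ ∑' n, coeff n f • T n
      map_add' := fun f g ↦ by
        simp only [map_add, add_smul,
          (summable_coeff_smul_T f).tsum_add (summable_coeff_smul_T g)]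
      map_smul' := fun c f ↦ by
        simp only [map_smul, smul_assoc, (summable_coeff_smul_T f).tsum_const_smul,
          RingHom.id_apply] }
  have hφ (f : WienerAlgebra) : ‖φ f‖ ≤ 1 * ‖f‖ := by
    have hnorm (n : ℤ) : ‖coeff n f • T n‖ = ‖coeff n f‖ * weight n := by rw [norm_smul, norm_T]
    rw [one_mul]
    refine tsum_of_norm_bounded (summable_norm_coeff f).hasSum (fun n ↦ (hnorm n).le) |>.trans ?_
    exact (summable_norm_coeff f).tsum_le_of_sum_le fun s ↦ sum_norm_coeff_le s f
  refine DFunLike.congr_fun (continuousLinearMap_ext (φ := φ.mkContinuous 1 hφ)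
    (ψ := ContinuousLinearMap.id ℂ _) fun m ↦ ?_) f
  change ∑' n, coeff n (T m) • T n = T m
  simp only [coeff_T, ite_smul, one_smul, zero_smul, eq_comm (a := m), tsum_ite_eq]

theorem map_eq_tsum {V : Type*} [NormedAddCommGroup V] [NormedSpace ℂ V] (φ : WienerAlgebra →L[ℂ] V)
    (f : WienerAlgebra) : φ f = ∑' n, coeff n f • φ (T n) := by
  conv_lhs => rw [← tsum_coeff_smul_T f]
  simp only [φ.map_tsum (summable_coeff_smul_T f), map_smul]

theorem ext_coeff {f g : WienerAlgebra} (h : ∀ n, coeff n f = coeff n g) : f = g := by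
  rw [← tsum_coeff_smul_T f, ← tsum_coeff_smul_T g]
  simp only [h]

end Coeff

section Evaluation

/-- The variable as a unit. -/
noncomputable def unitT : WienerAlgebraˣ where
  val := T 1
  inv := T (-1)
  val_inv := by rw [← T_add, add_neg_cancel, T_zero]
  inv_val := by rw [← T_add, neg_add_cancel, T_zero]

theorem T_natCast_mul (k : ℕ) (m : ℤ) : T (k * m) = T m ^ k := by
  induction k with
  | zero => rw [Nat.cast_zero, zero_mul, T_zero, pow_zero]
  | succ k ih => rw [Nat.cast_succ, add_one_mul, T_add, ih, pow_succ]

theorem coe_unitT_zpow (n : ℤ) : ((unitT ^ n : WienerAlgebraˣ) : WienerAlgebra) = T n := by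
  obtain ⟨k, rfl | rfl⟩ := n.eq_nat_or_neg
  · rw [zpow_natCast, Units.val_pow_eq_pow_val, unitT, ← T_natCast_mul, mul_one]
  · rw [zpow_neg, zpow_natCast, ← inv_pow, Units.val_pow_eq_pow_val, ← mul_neg_one, T_natCast_mul]
    rfl

/-- The open annulus `1/2 < |z| < 2`. -/
def annulus : Set ℂ := {z | 1 / 2 < ‖z‖ ∧ ‖z‖ < 2}

theorem isOpen_annulus : IsOpen annulus :=
  (isOpen_lt continuous_const continuous_norm).inter (isOpen_lt continuous_norm continuous_const)

theorem ne_zero_of_mem_annulus {z : ℂ} (hz : z ∈ annulus) : z ≠ 0 :=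
  norm_pos_iff.1 (one_half_pos.trans hz.1)

theorem mem_annulus_of_norm_eq_one {z : ℂ} (hz : ‖z‖ = 1) : z ∈ annulus := by
  constructor <;> rw [hz] <;> norm_num

theorem norm_inv_le_two {z : ℂ} (hz : z ∈ annulus) : ‖z⁻¹‖ ≤ 2 := by
  rw [norm_inv, inv_le_comm₀ (norm_pos_iff.2 (ne_zero_of_mem_annulus hz)) two_pos, ← one_div]
  exact hz.1.le

theorem norm_zpow_le_weight_of_mem_annulus {z : ℂ} (hz : z ∈ annulus) (n : ℤ) :
    ‖z ^ n‖ ≤ weight n := by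
  simpa using norm_zpow_le_weight (u := Units.mk0 z (ne_zero_of_mem_annulus hz)) hz.2.le
    (norm_inv_le_two hz) n

theorem isPreconnected_annulus : IsPreconnected annulus := by
  have himage :
      annulus = Complex.exp '' (Complex.reLm ⁻¹' Set.Ioo (Real.log (1 / 2)) (Real.log 2)) := by
    ext z
    constructor
    · intro hz
      have hz₀ := ne_zero_of_mem_annulus hz
      refine ⟨Complex.log z, ?_, Complex.exp_log hz₀⟩
      rw [Set.mem_preimage, Complex.reLm_coe, Complex.log_re]
      exact ⟨Real.log_lt_log one_half_pos hz.1, Real.log_lt_log (norm_pos_iff.2 hz₀) hz.2⟩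
    · rintro ⟨w, hw, rfl⟩
      rw [annulus, Set.mem_ofPred_eq, Complex.norm_exp, ← Real.log_lt_iff_lt_exp one_half_pos,
        ← Real.lt_log_iff_exp_lt two_pos]
      exact hw
  rw [himage]
  exact ((convex_Ioo _ _).linear_preimage Complex.reLm).isPreconnected.image _
    Complex.continuous_exp.continuousOn

/-- The value at the point `z` of the annulus of convergence. -/
noncomputable def eval (z : ℂ) (f : WienerAlgebra) : ℂ := ∑' n, coeff n f * z ^ n

theorem map_eq_eval (φ : WienerAlgebra →A[ℂ] ℂ) (f : WienerAlgebra) : φ f = eval (φ (T 1)) f := by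
  have hT (n : ℤ) : φ (T n) = φ (T 1) ^ n := by
    have := congr_arg Units.val (map_zpow (Units.map (φ : WienerAlgebra →* ℂ)) unitT n)
    rw [Units.val_zpow_eq_zpow_val, Units.coe_map, coe_unitT_zpow] at this
    exact this
  simp only [eval, ← hT]
  exact map_eq_tsum φ.toContinuousLinearMap f

theorem exists_map_T_one_eq {z : ℂ} (hz : z ∈ annulus) :
    ∃ φ : WienerAlgebra →A[ℂ] ℂ, φ (T 1) = z :=
  ⟨algLift (Units.mk0 z (ne_zero_of_mem_annulus hz)) hz.2.le (norm_inv_le_two hz),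
    (algLift_T _ _ 1).trans (by rw [zpow_one, Units.val_mk0])⟩

theorem eval_mul {z : ℂ} (hz : z ∈ annulus) (f g : WienerAlgebra) :
    eval z (f * g) = eval z f * eval z g := by
  obtain ⟨φ, rfl⟩ := exists_map_T_one_eq hz
  simp only [← map_eq_eval, map_mul]

theorem analyticOnNhd_eval (f : WienerAlgebra) : AnalyticOnNhd ℂ (fun z ↦ eval z f) annulus := by
  refine DifferentiableOn.analyticOnNhd ?_ isOpen_annulus
  refine Complex.differentiableOn_tsum_of_summable_norm (summable_norm_coeff f) (fun n z hz ↦ ?_)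
    isOpen_annulus fun n z hz ↦ ?_
  · exact ((differentiableAt_zpow.2 (.inl (ne_zero_of_mem_annulus hz))).const_mul
      _).differentiableWithinAt
  · rw [norm_mul]
    exact mul_le_mul_of_nonneg_left (norm_zpow_le_weight_of_mem_annulus hz n) (norm_nonneg _)

theorem eq_zero_of_eval_eq_zero {f : WienerAlgebra} (h : ∀ z, ‖z‖ = 1 → eval z f = 0) : f = 0 := by
  let Φ : WienerAlgebra →L[ℂ] C(UnitAddCircle, ℂ) := lift fun n ↦ fourier n
  have hΦ : ∀ n, Φ (T n) = fourier n := lift_T fun n ↦ (fourier_norm n).trans_le (one_le_weight n)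
  let toLp := ContinuousMap.toLp (E := ℂ) 2 (AddCircle.haarAddCircle (T := 1)) ℂ
  have hcoeff (n : ℤ) : innerSL ℂ (fourierLp (T := 1) 2 n) ∘L toLp ∘L Φ = coeff n :=
    continuousLinearMap_ext fun m ↦ by
      simp only [ContinuousLinearMap.comp_apply, hΦ, coeff_T, innerSL_apply_apply]
      refine (orthonormal_iff_ite.1 orthonormal_fourier n m).trans ?_
      simp only [eq_comm]
  have hΦf : Φ f = 0 := by
    ext x
    refine Eq.trans ?_ (h (AddCircle.toCircle x) (Circle.norm_coe _))
    refine (map_eq_tsum (ContinuousMap.evalCLM ℂ x ∘L Φ) f).trans (tsum_congr fun n ↦ ?_)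
    rw [ContinuousLinearMap.comp_apply, hΦ, smul_eq_mul, ContinuousMap.evalCLM_apply, fourier_apply,
      AddCircle.toCircle_zsmul, Circle.coe_zpow]
  refine ext_coeff fun n ↦ ?_
  rw [← hcoeff, ContinuousLinearMap.comp_apply, ContinuousLinearMap.comp_apply, hΦf, map_zero,
    map_zero, map_zero]

theorem eq_zero_of_eventually_eval_eq_zero {f : WienerAlgebra} {z : ℂ} (hz : z ∈ annulus)
    (h : ∀ᶠ w in nhds z, eval w f = 0) : f = 0 :=
  eq_zero_of_eval_eq_zero fun _ hw ↦
    (analyticOnNhd_eval f).eqOn_zero_of_preconnected_of_eventuallyEq_zero isPreconnected_annulus hz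
      h (mem_annulus_of_norm_eq_one hw)

end Evaluation

instance : Nontrivial WienerAlgebra := NormOneClass.nontrivial

instance : IsDomain WienerAlgebra :=
  have : NoZeroDivisors WienerAlgebra := ⟨fun {f g} hfg ↦ by
    have hvanish {f : WienerAlgebra} (hf : ∀ z ∈ annulus, eval z f = 0) : f = 0 :=
      eq_zero_of_eval_eq_zero fun z hz ↦ hf z (mem_annulus_of_norm_eq_one hz)
    refine ((analyticOnNhd_eval f).eq_zero_or_eq_zero_of_mul_eq_zero (analyticOnNhd_eval g)
      (fun z hz ↦ ?_) isPreconnected_annulus).imp hvanish hvanish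
    rw [← eval_mul hz, hfg]
    simp only [eval, map_zero, zero_mul, tsum_zero]⟩
  NoZeroDivisors.to_isDomain WienerAlgebra

section Supported

theorem coeff_T_mul (n m : ℤ) (f : WienerAlgebra) : coeff n (T m * f) = coeff (n - m) f := by
  have h : coeff n ∘L ContinuousLinearMap.mul ℂ _ (T m) = coeff (n - m) :=
    continuousLinearMap_ext fun k ↦ by
      simp only [ContinuousLinearMap.comp_apply, ContinuousLinearMap.mul_apply', ← T_add, coeff_T,
        eq_sub_iff_add_eq']
  exact DFunLike.congr_fun h f

theorem coeff_mul (n : ℤ) (f g : WienerAlgebra) :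
    coeff n (f * g) = ∑' m, coeff m f * coeff (n - m) g := by
  simpa only [ContinuousLinearMap.comp_apply, ContinuousLinearMap.flip_apply,
    ContinuousLinearMap.mul_apply', coeff_T_mul, smul_eq_mul] using
    map_eq_tsum (coeff n ∘L (ContinuousLinearMap.mul ℂ _).flip g) f

/-- The subalgebra of the series whose exponents lie in the submonoid `s` of `ℤ`. -/
noncomputable def supported (s : AddSubmonoid ℤ) : Subalgebra ℂ WienerAlgebra where
  carrier := {f | ∀ n ∉ s, coeff n f = 0}
  mul_mem' {f g} hf hg n hn := by
    rw [coeff_mul]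
    refine (tsum_congr fun m ↦ ?_).trans tsum_zero
    by_cases hm : m ∈ s
    · rw [hg (n - m) fun h ↦ hn (by simpa using s.add_mem hm h), mul_zero]
    · rw [hf m hm, zero_mul]
  add_mem' hf hg n hn := by rw [map_add, hf n hn, hg n hn, add_zero]
  algebraMap_mem' c n hn := by
    rw [Algebra.algebraMap_eq_smul_one, ← T_zero, map_smul, coeff_T,
      if_neg (ne_of_mem_of_not_mem s.zero_mem hn), smul_zero]

variable {s : AddSubmonoid ℤ}

theorem mem_supported {f : WienerAlgebra} : f ∈ supported s ↔ ∀ n ∉ s, coeff n f = 0 := Iff.rfl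

theorem T_mem_supported {n : ℤ} (hn : n ∈ s) : T n ∈ supported s := fun m hm ↦ by
  rw [coeff_T, if_neg (ne_of_mem_of_not_mem hn hm)]

theorem isClosed_supported (s : AddSubmonoid ℤ) : IsClosed (supported s : Set WienerAlgebra) := by
  have h : (supported s : Set WienerAlgebra) = ⋂ n ∉ s, {f | coeff n f = 0} := by
    ext f
    simp only [SetLike.mem_coe, mem_supported, Set.mem_iInter, Set.mem_ofPred_eq]
  rw [h]
  exact isClosed_biInter fun n _ ↦ isClosed_eq (coeff n).continuous continuous_const

/-- The subalgebra of the power series in the variable. -/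
noncomputable def plus : Subalgebra ℂ WienerAlgebra := supported (AddSubmonoid.nonneg ℤ)

/-- The subalgebra of the power series in the inverse of the variable. -/
noncomputable def minus : Subalgebra ℂ WienerAlgebra :=
  supported ((AddSubmonoid.nonneg ℤ).comap negAddMonoidHom)

theorem mem_plus {f : WienerAlgebra} : f ∈ plus ↔ ∀ n < 0, coeff n f = 0 := by
  simp only [plus, mem_supported, AddSubmonoid.mem_nonneg, not_le]

theorem mem_minus {f : WienerAlgebra} : f ∈ minus ↔ ∀ n, 0 < n → coeff n f = 0 := by
  simp only [minus, mem_supported, AddSubmonoid.mem_comap, negAddMonoidHom_apply,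
    AddSubmonoid.mem_nonneg, not_le, Int.neg_neg_iff_pos]

theorem T_mem_plus {n : ℤ} (hn : 0 ≤ n) : T n ∈ plus := T_mem_supported hn

theorem T_mem_minus {n : ℤ} (hn : n ≤ 0) : T n ∈ minus := T_mem_supported (neg_nonneg.2 hn)

end Supported

section Projection

open Classical in
/-- The projection omitting all terms whose exponent is not in `s`. -/
noncomputable def proj (s : Set ℤ) : WienerAlgebra →L[ℂ] WienerAlgebra :=
  lift fun n ↦ if n ∈ s then T n else 0

open Classical in
theorem norm_ite_T_le (s : Set ℤ) (n : ℤ) : ‖if n ∈ s then T n else 0‖ ≤ weight n := by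
  split_ifs
  · exact (norm_T n).le
  · exact norm_zero.trans_le (weight_pos n).le

theorem norm_proj_le (s : Set ℤ) (f : WienerAlgebra) : ‖proj s f‖ ≤ ‖f‖ :=
  norm_lift_le (norm_ite_T_le s) f

open Classical in
theorem coeff_proj (s : Set ℤ) (n : ℤ) (f : WienerAlgebra) :
    coeff n (proj s f) = if n ∈ s then coeff n f else 0 := by
  have h : coeff n ∘L proj s = if n ∈ s then coeff n else 0 :=
    continuousLinearMap_ext fun m ↦ by
      rw [ContinuousLinearMap.comp_apply, proj, lift_T (norm_ite_T_le s)]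
      split_ifs with hm hn hn
      · rfl
      · rw [coeff_T, if_neg (ne_of_mem_of_not_mem hm hn), zero_apply]
      · rw [map_zero, coeff_T, if_neg (ne_of_mem_of_not_mem hn hm).symm]
      · rw [map_zero, zero_apply]
  refine (DFunLike.congr_fun h f).trans ?_
  split_ifs <;> rfl

theorem sub_proj (s : Set ℤ) (f : WienerAlgebra) : f - proj s f = proj sᶜ f :=
  ext_coeff fun n ↦ by
    rw [map_sub, coeff_proj, coeff_proj, Set.mem_compl_iff]
    split_ifs
    · exact sub_self _
    · exact sub_zero _

end Projection

section Polynomials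

open Polynomial

theorem T_natCast (n : ℕ) : T n = T 1 ^ n := by simpa using T_natCast_mul n 1

/-- Polynomials are regarded as series by evaluating them at the variable `T 1`. -/
noncomputable instance : Algebra ℂ[X] WienerAlgebra := (aeval (R := ℂ) (T 1)).toAlgebra

theorem algebraMap_polynomial (p : ℂ[X]) :
    algebraMap ℂ[X] WienerAlgebra p = ∑ n ∈ Finset.range (p.natDegree + 1), p.coeff n • T n := by
  simp only [T_natCast]
  exact aeval_eq_sum_range _

instance : IsScalarTower ℂ ℂ[X] WienerAlgebra :=
  .of_algebraMap_eq fun c ↦ (aeval_C (T 1) c).symm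

theorem coeff_algebraMap (p : ℂ[X]) (n : ℕ) :
    coeff n (algebraMap ℂ[X] WienerAlgebra p) = p.coeff n := by
  simp only [algebraMap_polynomial, map_sum, map_smul, coeff_T, Nat.cast_inj, smul_eq_mul, mul_ite,
    mul_one, mul_zero, Finset.sum_ite_eq', Finset.mem_range, Nat.lt_succ_iff]
  exact ite_eq_left_iff.2 fun h ↦ (coeff_eq_zero_of_natDegree_lt (not_le.1 h)).symm

instance : FaithfulSMul ℂ[X] WienerAlgebra :=
  (faithfulSMul_iff_algebraMap_injective _ _).2 fun p q h ↦ by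
    ext n
    rw [← coeff_algebraMap, h, coeff_algebraMap]

theorem algebraMap_mem_plus (p : ℂ[X]) : algebraMap ℂ[X] WienerAlgebra p ∈ plus := by
  rw [algebraMap_polynomial]
  exact plus.sum_mem fun n _ ↦ plus.smul_mem (T_mem_plus n.cast_nonneg) _

theorem T_mul_algebraMap_mem_minus {p : ℂ[X]} {N : ℕ} (hN : p.natDegree ≤ N) :
    T (-N) * algebraMap ℂ[X] WienerAlgebra p ∈ minus := by
  rw [algebraMap_polynomial, Finset.mul_sum]
  refine minus.sum_mem fun n hn ↦ ?_
  rw [mul_smul_comm, ← T_add]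
  refine minus.smul_mem (T_mem_minus ?_) _
  rw [Finset.mem_range] at hn
  lia

theorem exists_algebraMap_eq {f : WienerAlgebra} {N : ℕ} (hf : f ∈ plus)
    (hf' : T (-N) * f ∈ minus) : ∃ p : ℂ[X], algebraMap ℂ[X] WienerAlgebra p = f := by
  rw [mem_plus] at hf
  have hvanish (n : ℤ) (hn : N < n) : coeff n f = 0 := by
    simpa only [coeff_T_mul, sub_neg_eq_add, sub_add_cancel] using
      mem_minus.1 hf' (n - N) (sub_pos.2 hn)
  refine ⟨∑ k ∈ Finset.range (N + 1), monomial k (coeff k f), ext_coeff fun n ↦ ?_⟩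
  obtain hn | hn := lt_or_ge n 0
  · rw [hf n hn, mem_plus.1 (algebraMap_mem_plus _) n hn]
  · lift n to ℕ using hn
    simp only [coeff_algebraMap, finsetSum_coeff, coeff_monomial, Finset.sum_ite_eq',
      Finset.mem_range, Nat.lt_succ_iff]
    exact ite_eq_left_iff.2 fun h ↦ (hvanish n (by exact_mod_cast not_le.1 h)).symm

end Polynomials

section Substitutions

theorem norm_unitT_le : ‖(unitT : WienerAlgebra)‖ ≤ 2 := by
  rw [unitT, norm_T, weight]
  norm_num

theorem norm_unitT_inv_le : ‖((unitT⁻¹ : WienerAlgebraˣ) : WienerAlgebra)‖ ≤ 2 := by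
  change ‖T (-1)‖ ≤ 2
  rw [norm_T, weight]
  norm_num

/-- The automorphism inverting the variable. -/
noncomputable def flip : WienerAlgebra →A[ℂ] WienerAlgebra :=
  algLift unitT⁻¹ norm_unitT_inv_le (by rw [inv_inv]; exact norm_unitT_le)

theorem flip_T (n : ℤ) : flip (T n) = T (-n) := by
  rw [flip, algLift_T, inv_zpow', coe_unitT_zpow]

theorem coeff_flip (n : ℤ) (f : WienerAlgebra) : coeff n (flip f) = coeff (-n) f := by
  have h : coeff n ∘L flip.toContinuousLinearMap = coeff (-n) :=
    continuousLinearMap_ext fun m ↦ by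
      refine (congr_arg (coeff n) (flip_T m)).trans ?_
      simp only [coeff_T, neg_eq_iff_eq_neg]
  exact DFunLike.congr_fun h f

theorem flip_injective : Function.Injective flip := fun f g h ↦ ext_coeff fun n ↦ by
  rw [← neg_neg n, ← coeff_flip, h, coeff_flip]

theorem flip_mem_minus {f : WienerAlgebra} (hf : f ∈ plus) : flip f ∈ minus :=
  mem_minus.2 fun n hn ↦ by rw [coeff_flip, mem_plus.1 hf _ (neg_lt_zero.2 hn)]

theorem exists_unit_shift : ∃ u : WienerAlgebraˣ, u.val = 1 + (1 / 4 : ℂ) • T 1 ∧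
    u⁻¹.val ∈ plus ∧ ‖u.val‖ ≤ 2 ∧ ‖u⁻¹.val‖ ≤ 2 := by
  have hnorm : ‖(1 / 4 : ℂ) • T 1‖ = 1 / 2 := by
    rw [norm_smul, norm_T, weight]
    norm_num
  obtain ⟨u, hu, hu', hle⟩ := exists_unit_one_add_mem (S := plus.toSubring)
    (isClosed_supported _) (plus.smul_mem (T_mem_plus zero_le_one) (1 / 4))
    (by rw [hnorm]; norm_num)
  rw [hnorm, norm_one] at hle
  refine ⟨u, hu, hu', ?_, hle.trans (by norm_num)⟩
  rw [hu]
  refine (norm_add_le _ _).trans ?_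
  rw [norm_one, hnorm]
  norm_num

theorem eval_map {φ : WienerAlgebra →A[ℂ] WienerAlgebra} {z : ℂ} (hz : z ∈ annulus)
    (f : WienerAlgebra) : eval z (φ f) = eval (eval z (φ (T 1))) f := by
  obtain ⟨ψ, rfl⟩ := exists_map_T_one_eq hz
  rw [← map_eq_eval, ← map_eq_eval]
  exact map_eq_eval (ψ.comp φ) f

-- Since `1 + z / 4` lies in the annulus for `‖z‖ < 2`, the composites are power series.
theorem exists_shift : ∃ φ : WienerAlgebra →A[ℂ] WienerAlgebra,
    φ (T 1) = 1 + (1 / 4 : ℂ) • T 1 ∧ Function.Injective φ ∧ ∀ f, φ f ∈ plus := by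
  obtain ⟨u, hu, hu', hle, hle'⟩ := exists_unit_shift
  have huT : algLift u hle hle' (T 1) = 1 + (1 / 4 : ℂ) • T 1 := by rw [algLift_T, zpow_one, hu]
  have hmem : (u : WienerAlgebra) ∈ plus := by
    rw [hu]
    exact plus.add_mem plus.one_mem (plus.smul_mem (T_mem_plus zero_le_one) _)
  refine ⟨algLift u hle hle', huT, (injective_iff_map_eq_zero _).2 fun f hf ↦ ?_, fun f ↦ ?_⟩
  · have hvanish {z : ℂ} (hz : z ∈ annulus) : eval (1 + z / 4) f = 0 := by
      have heval : eval z (1 + (1 / 4 : ℂ) • T 1) = 1 + z / 4 := by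
        obtain ⟨ψ, rfl⟩ := exists_map_T_one_eq hz
        rw [← map_eq_eval, map_add, map_one, map_smul, smul_eq_mul, one_div_mul_eq_div]
      rw [← heval, ← huT, ← eval_map hz, hf]
      simp only [eval, map_zero, zero_mul, tsum_zero]
    have hone : (1 : ℂ) ∈ annulus := mem_annulus_of_norm_eq_one norm_one
    refine eq_zero_of_eventually_eval_eq_zero (z := 1 + 1 / 4) (by constructor <;> norm_num) ?_
    have hcont : Filter.Tendsto (fun w : ℂ ↦ 4 * (w - 1)) (nhds (1 + 1 / 4)) (nhds 1) :=
      Continuous.tendsto' (by fun_prop) _ _ (by norm_num)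
    filter_upwards [hcont.eventually_mem (isOpen_annulus.mem_nhds hone)] with w hw
    simpa using hvanish hw
  · refine mem_of_forall_T_mem (S := (Subalgebra.toSubmodule plus).comap
      (algLift u hle hle').toLinearMap) ((isClosed_supported _).preimage
        (map_continuous (algLift u hle hle'))) (fun n ↦ ?_) f
    change algLift u hle hle' (T n) ∈ plus
    rw [algLift_T]
    exact (plus.toSubmonoid.units.zpow_mem (x := u) ⟨hmem, hu'⟩ n).1

end Substitutions

section Roots

theorem exists_pow_eq_one_add_smul {n : ℕ} (hn : n ≠ 0) : ∃ (c : ℂ) (y : WienerAlgebraˣ),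
    c ≠ 0 ∧ y.val ∈ plus ∧ y⁻¹.val ∈ plus ∧ y.val ^ n = 1 + c • T 1 := by
  have : CompleteSpace plus := (isClosed_supported _).completeSpace_coe
  have hn' : (n : ℂ) ≠ 0 := Nat.cast_ne_zero.2 hn
  -- The derivative of `x ↦ x ^ n` at `1` is multiplication by `n`, so powers fill a neighbourhood.
  have hderiv := (hasStrictFDerivAt_id (𝕜 := ℂ) (1 : plus)).pow n
  have hmap : Filter.map (fun x : plus ↦ x ^ n) (nhds 1) = nhds 1 := by
    have hopen := hderiv.map_nhds_eq_of_surj <| LinearMap.range_eq_top.2 fun z ↦ by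
      refine ⟨(n : ℂ)⁻¹ • z, ?_⟩
      change (n • (id (1 : plus)) ^ (n - 1)) • ((n : ℂ)⁻¹ • z) = z
      rw [id, one_pow, smul_assoc, one_smul, ← Nat.cast_smul_eq_nsmul ℂ, smul_smul,
        mul_inv_cancel₀ hn', one_smul]
    simpa only [id, one_pow] using hopen
  have himage := Filter.image_mem_map (m := fun x : plus ↦ x ^ n)
    (Metric.ball_mem_nhds (1 : plus) one_pos)
  rw [hmap] at himage
  let t : plus := ⟨T 1, T_mem_plus zero_le_one⟩
  have hcont : Filter.Tendsto (fun c : ℂ ↦ 1 + c • t) (nhds 0) (nhds 1) :=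
    Continuous.tendsto' (by fun_prop) _ _ (by rw [zero_smul, add_zero])
  have hpow : ∀ᶠ c in nhdsWithin (0 : ℂ) {0}ᶜ,
      1 + c • t ∈ (fun x : plus ↦ x ^ n) '' Metric.ball 1 1 :=
    nhdsWithin_le_nhds (hcont himage)
  obtain ⟨c, ⟨y, hy, hyc⟩, hc⟩ := (hpow.and eventually_mem_nhdsWithin).exists
  obtain ⟨u, hu, hu', -⟩ := exists_unit_one_add_mem (S := plus.toSubring) (isClosed_supported _)
    (x := (y - 1 : WienerAlgebra)) (sub_mem y.2 plus.one_mem) (mem_ball_iff_norm.1 hy)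
  rw [add_sub_cancel] at hu
  refine ⟨c, u, hc, hu ▸ y.2, hu', ?_⟩
  rw [hu]
  exact congr_arg Subtype.val hyc

end Roots

end WienerAlgebra

end Wiener

section Cartan

open Matrix

theorem exists_one_add_mul_one_sub_eq {M : Type*} [NormedRing M] [CompleteSpace M] {P : M →+ M}
    (hP : ∀ x, ‖P x‖ ≤ ‖x‖) {ε : M} (hε : ‖ε‖ < 1 / 2) :
    ∃ z, (1 + ε) * (1 - P z) = 1 + (z - P z) ∧ ‖z‖ < 1 := by
  have hnorm (x : M) : ‖ε * P x‖ ≤ ‖ε‖ * ‖x‖ :=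
    (norm_mul_le _ _).trans (mul_le_mul_of_nonneg_left (hP x) (norm_nonneg ε))
  have hcontr : ContractingWith ‖ε‖₊ fun z ↦ ε * (1 - P z) := by
    refine ⟨NNReal.coe_lt_coe.1 (hε.trans (by norm_num)), .of_dist_le_mul fun x y ↦ ?_⟩
    rw [dist_eq_norm, dist_eq_norm, ← mul_sub, sub_sub_sub_cancel_left, ← map_sub, norm_sub_rev x]
    exact hnorm _
  obtain ⟨z, hz⟩ : ∃ z, ε * (1 - P z) = z := ⟨_, hcontr.fixedPoint_isFixedPt⟩
  refine ⟨z, by rw [add_mul, one_mul, hz, sub_add_eq_add_sub, add_sub_assoc], ?_⟩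
  have hle : ‖z‖ ≤ ‖ε‖ + ‖ε‖ * ‖z‖ :=
    calc ‖z‖ = ‖ε - ε * P z‖ := by rw [← mul_one_sub, hz]
      _ ≤ ‖ε‖ + ‖ε * P z‖ := norm_sub_le _ _
      _ ≤ ‖ε‖ + ‖ε‖ * ‖z‖ := add_le_add_right (hnorm z) _
  nlinarith [norm_nonneg z]

attribute [local instance] Matrix.linftyOpNormedRing

variable {ι α : Type*} [Fintype ι] [DecidableEq ι] [NormedRing α]

theorem matrix_norm_mono {A B : Matrix ι ι α} (h : ∀ i j, ‖A i j‖ ≤ ‖B i j‖) : ‖A‖ ≤ ‖B‖ := by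
  rw [linfty_opNorm_def, linfty_opNorm_def, NNReal.coe_le_coe]
  exact Finset.sup_mono_fun fun i _ ↦ Finset.sum_le_sum fun j _ ↦ h i j

theorem isClosed_subring_matrix {S : Subring α} (hS : IsClosed (S : Set α)) :
    IsClosed ((S.matrix : Subring (Matrix ι ι α)) : Set (Matrix ι ι α)) := by
  have h : ((S.matrix : Subring (Matrix ι ι α)) : Set (Matrix ι ι α)) =
      ⋂ i, ⋂ j, (fun A : Matrix ι ι α ↦ A i j) ⁻¹' (S : Set α) := by
    ext A
    simp only [Set.mem_iInter]
    rfl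
  rw [h]
  exact isClosed_iInter fun i ↦ isClosed_iInter fun j ↦ hS.preimage (continuous_apply_apply i j)

theorem completeSpace_matrix [CompleteSpace α] :
    @CompleteSpace (Matrix ι ι α) PseudoMetricSpace.toUniformSpace :=
  inferInstanceAs (CompleteSpace (ι → ι → α))

attribute [local instance] completeSpace_matrix

theorem exists_mem_glOver_val_eq_one_add {α : Type*} [NormedCommRing α] [CompleteSpace α]
    {S : Subring α} (hS : IsClosed (S : Set α)) {A : Matrix ι ι α} (hA : A ∈ S.matrix)
    (hA' : ‖A‖ < 1) : ∃ U ∈ glOver ι S, U.val = 1 + A := by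
  obtain ⟨U, hU, hU', -⟩ := exists_unit_one_add_mem (isClosed_subring_matrix hS) hA hA'
  refine ⟨U, ⟨?_, hU'⟩, hU⟩
  change U.val ∈ S.matrix
  rw [hU]
  exact add_mem (one_mem _) hA

open WienerAlgebra

theorem exists_mul_mem_glOver_plus {C : Matrix ι ι WienerAlgebra} (hC : ‖C - 1‖ < 1 / 2) :
    ∃ V ∈ glOver ι minus.toSubring, ∃ Y ∈ glOver ι plus.toSubring, C * V.val = Y.val := by
  let P : Matrix ι ι WienerAlgebra →+ Matrix ι ι WienerAlgebra :=
    (proj {n | n < 0}).toLinearMap.toAddMonoidHom.mapMatrix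
  have hP (A : Matrix ι ι WienerAlgebra) : ‖P A‖ ≤ ‖A‖ :=
    matrix_norm_mono fun i j ↦ norm_proj_le _ _
  have hPminus (A : Matrix ι ι WienerAlgebra) : P A ∈ minus.toSubring.matrix := fun i j ↦
    mem_minus.2 fun n hn ↦ (coeff_proj _ _ _).trans (if_neg hn.not_gt)
  have hsub (A : Matrix ι ι WienerAlgebra) (i j : ι) :
      (A - P A) i j = proj {n | n < 0}ᶜ (A i j) := sub_proj _ _
  have hPplus (A : Matrix ι ι WienerAlgebra) : A - P A ∈ plus.toSubring.matrix := fun i j ↦ by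
    rw [hsub]
    exact mem_plus.2 fun n hn ↦ (coeff_proj _ _ _).trans (if_neg (not_not.2 hn))
  have hP' (A : Matrix ι ι WienerAlgebra) : ‖A - P A‖ ≤ ‖A‖ := matrix_norm_mono fun i j ↦ by
    rw [hsub]
    exact norm_proj_le _ _
  obtain ⟨z, hz, hz'⟩ := exists_one_add_mul_one_sub_eq hP hC
  obtain ⟨V, hV, hVz⟩ := exists_mem_glOver_val_eq_one_add (isClosed_supported _)
    (neg_mem (hPminus z)) ((norm_neg (P z)).trans_le (hP z) |>.trans_lt hz')
  obtain ⟨Y, hY, hYz⟩ := exists_mem_glOver_val_eq_one_add (isClosed_supported _) (hPplus z)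
    ((hP' z).trans_lt hz')
  refine ⟨V, hV, Y, hY, ?_⟩
  rw [hVz, hYz, ← hz, add_sub_cancel, sub_eq_add_neg]

theorem exists_laurent_factorization (B : GL ι WienerAlgebra) : ∃ U : GL ι WienerAlgebra,
    (∀ i j, U.val i j ∈ Set.range ofLaurent) ∧
      ∃ V ∈ glOver ι minus.toSubring, ∃ Y ∈ glOver ι plus.toSubring, B * U * V = Y := by
  have hdense : DenseRange fun A : Matrix ι ι (LaurentPolynomial ℂ) ↦ A.map ofLaurent :=
    .piMap fun _ ↦ .piMap fun _ ↦ denseRange_ofLaurent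
  have hopen : IsOpen {A | ‖B.val * A - 1‖ < 1 / 2} :=
    isOpen_lt (by fun_prop) continuous_const
  obtain ⟨A, hA⟩ := hdense.exists_mem_open hopen ⟨B⁻¹.val, by simp⟩
  obtain ⟨V, hV, Y, hY, h⟩ := exists_mul_mem_glOver_plus hA
  have hU : (B⁻¹ * Y * V⁻¹).val = A.map ofLaurent := by
    rw [Units.val_mul, Units.val_mul, ← h, ← mul_assoc, Units.inv_mul_cancel_left,
      Units.mul_inv_cancel_right]
  refine ⟨B⁻¹ * Y * V⁻¹, fun i j ↦ ⟨A i j, ?_⟩, V, hV, Y, hY, by group⟩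
  rw [hU, map_apply]

end Cartan

section RationalFunctions

theorem intDegree_pow {k : Type*} [Field k] {a : RatFunc k} (ha : a ≠ 0) (n : ℕ) :
    (a ^ n).intDegree = n * a.intDegree := by
  induction n with
  | zero => simp
  | succ n ih =>
    rw [pow_succ, RatFunc.intDegree_mul (pow_ne_zero _ ha) ha, ih, Nat.cast_succ, add_one_mul]

theorem pow_ne_pow_of_intDegree_eq_one {k : Type*} [Field k] {b : RatFunc k}
    (hb : b.intDegree = 1) (a : RatFunc k) {j n : ℕ} (hj : 0 < j) (hjn : j < n) :
    b ^ j ≠ a ^ n := by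
  intro h
  have hb0 : b ≠ 0 := by
    rintro rfl
    simp at hb
  have ha0 : a ≠ 0 := by
    rintro rfl
    rw [zero_pow (hj.trans hjn).ne'] at h
    exact pow_ne_zero j hb0 h
  have hdegree : (j : ℤ) = n * a.intDegree := by
    rw [← intDegree_pow ha0, ← h, intDegree_pow hb0, hb, mul_one]
  have hdvd : n ∣ j := Int.natCast_dvd_natCast.1 ⟨_, hdegree⟩
  exact (Nat.le_of_dvd hj hdvd).not_gt hjn

theorem intDegree_one_add_smul_X {k : Type*} [Field k] {c : k} (hc : c ≠ 0) :
    (1 + c • RatFunc.X : RatFunc k).intDegree = 1 := by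
  have h : (1 + c • RatFunc.X : RatFunc k) =
      algebraMap _ _ (Polynomial.C c * Polynomial.X + Polynomial.C 1) := by
    simp only [map_add, map_mul, RatFunc.algebraMap_X, RatFunc.algebraMap_C, map_one,
      RatFunc.smul_eq_C_mul]
    exact add_comm _ _
  rw [h, RatFunc.intDegree_polynomial, Polynomial.natDegree_linear hc, Nat.cast_one]

theorem algebraMap_denom_mul {k : Type*} [Field k] (a : RatFunc k) :
    algebraMap _ (RatFunc k) a.denom * a = algebraMap _ (RatFunc k) a.num := by
  nth_rw 2 [← RatFunc.num_div_denom a]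
  exact mul_div_cancel₀ _ (RatFunc.algebraMap_ne_zero a.denom_ne_zero)

open scoped IntermediateField

theorem mem_bot_iff_mem_adjoin_X {k K : Type*} [Field k] [Field K] [Algebra k K]
    [Algebra (RatFunc k) K] [IsScalarTower k (RatFunc k) K] {x : K} :
    x ∈ (⊥ : Subalgebra (RatFunc k) K) ↔ x ∈ k⟮algebraMap (RatFunc k) K RatFunc.X⟯ := by
  have h : (IsScalarTower.toAlgHom k (RatFunc k) K).fieldRange =
      k⟮algebraMap (RatFunc k) K RatFunc.X⟯ := by
    rw [AlgHom.fieldRange_eq_map, ← RatFunc.adjoin_X, IntermediateField.adjoin_map,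
      Set.image_singleton]
    rfl
  rw [← h]
  rfl

theorem bot_toSubring_map_eq {k K L : Type*} [Field k] [Field K] [Field L] [Algebra k K]
    [Algebra k L] [Algebra (RatFunc k) K] [Algebra (RatFunc k) L] [IsScalarTower k (RatFunc k) K]
    [IsScalarTower k (RatFunc k) L] {ψ : K →ₐ[k] L}
    (hψ : k⟮ψ (algebraMap (RatFunc k) K RatFunc.X)⟯ = k⟮algebraMap (RatFunc k) L RatFunc.X⟯) :
    (⊥ : Subalgebra (RatFunc k) K).toSubring.map (ψ : K →+* L) =
      (⊥ : Subalgebra (RatFunc k) L).toSubring := by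
  have hmap := IntermediateField.adjoin_map k {algebraMap (RatFunc k) K RatFunc.X} ψ
  rw [Set.image_singleton, hψ] at hmap
  ext x
  refine .trans ?_ mem_bot_iff_mem_adjoin_X.symm
  rw [← hmap]
  exact exists_congr fun y ↦ and_congr_left fun _ ↦ mem_bot_iff_mem_adjoin_X

theorem exists_smul_mem_of_mem_adjoin {E K : Type*} [Field E] [Field K] [Algebra E K]
    {R : Subring K} (hR : ∀ a : E, ∃ s : E, s ≠ 0 ∧ algebraMap E K s ∈ R ∧ s • algebraMap E K a ∈ R)
    {x : K} (hx : x ∈ Algebra.adjoin E (R : Set K)) :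
    ∃ s : E, s ≠ 0 ∧ algebraMap E K s ∈ R ∧ s • x ∈ R := by
  induction hx using Algebra.adjoin_induction with
  | mem x hx => exact ⟨1, one_ne_zero, by rw [map_one]; exact R.one_mem, by rwa [one_smul]⟩
  | algebraMap a => exact hR a
  | add x y _ _ hx hy =>
    obtain ⟨s, hs, hsR, hsx⟩ := hx
    obtain ⟨t, ht, htR, hty⟩ := hy
    refine ⟨s * t, mul_ne_zero hs ht, by rw [map_mul]; exact R.mul_mem hsR htR, ?_⟩
    have h : (s * t) • (x + y) = algebraMap E K t * s • x + algebraMap E K s * t • y := by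
      simp only [Algebra.smul_def, map_mul]
      ring
    rw [h]
    exact R.add_mem (R.mul_mem htR hsx) (R.mul_mem hsR hty)
  | mul x y _ _ hx hy =>
    obtain ⟨s, hs, hsR, hsx⟩ := hx
    obtain ⟨t, ht, htR, hty⟩ := hy
    refine ⟨s * t, mul_ne_zero hs ht, by rw [map_mul]; exact R.mul_mem hsR htR, ?_⟩
    rw [← smul_mul_smul_comm]
    exact R.mul_mem hsx hty

end RationalFunctions

section WienerField

open Polynomial WienerAlgebra

/-- The fraction field of the Wiener algebra, an extension of `ℂ(t)` in which `t` is `T 1`. -/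
abbrev WienerField : Type := FractionRing WienerAlgebra

namespace WienerField

noncomputable instance : Algebra (RatFunc ℂ) WienerField := RatFunc.liftAlgebra ℂ WienerField

instance : IsScalarTower ℂ[X] (RatFunc ℂ) WienerField :=
  RatFunc.isScalarTower_liftAlgebra ℂ WienerField

instance : IsScalarTower ℂ (RatFunc ℂ) WienerField := .to₁₃₄ ℂ ℂ[X] _ _

theorem algebraMap_algebraMap_polynomial (p : ℂ[X]) :
    algebraMap (RatFunc ℂ) WienerField (algebraMap ℂ[X] (RatFunc ℂ) p) =
      algebraMap WienerAlgebra WienerField (algebraMap ℂ[X] WienerAlgebra p) := by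
  rw [← IsScalarTower.algebraMap_apply, ← IsScalarTower.algebraMap_apply]

theorem algebraMap_X : algebraMap (RatFunc ℂ) WienerField RatFunc.X =
    algebraMap WienerAlgebra WienerField (T 1) := by
  rw [← RatFunc.algebraMap_X, algebraMap_algebraMap_polynomial]
  exact congr_arg _ (aeval_X _)

theorem algebraMap_X_zpow (n : ℤ) : algebraMap (RatFunc ℂ) WienerField (RatFunc.X ^ n) =
    algebraMap WienerAlgebra WienerField (T n) := by
  have h := Units.val_zpow_eq_zpow_val
    (Units.map (algebraMap WienerAlgebra WienerField : WienerAlgebra →* WienerField) unitT) n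
  rw [← map_zpow, Units.coe_map, coe_unitT_zpow] at h
  rw [map_zpow₀, algebraMap_X]
  exact h.symm

theorem algebraMap_one_add_smul_X (c : ℂ) :
    algebraMap (RatFunc ℂ) WienerField (1 + c • RatFunc.X) =
      algebraMap WienerAlgebra WienerField (1 + c • T 1) := by
  have hR := map_smul (IsScalarTower.toAlgHom ℂ (RatFunc ℂ) WienerField) c RatFunc.X
  have hW := map_smul (IsScalarTower.toAlgHom ℂ WienerAlgebra WienerField) c (T 1)
  simp only [IsScalarTower.coe_toAlgHom'] at hR hW
  rw [map_add, map_add, map_one, map_one, hR, hW, algebraMap_X]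

theorem algebraMap_ofLaurent_mem (p : LaurentPolynomial ℂ) :
    algebraMap WienerAlgebra WienerField (ofLaurent p) ∈
      (⊥ : Subalgebra (RatFunc ℂ) WienerField) := by
  have h : algebraMap WienerAlgebra WienerField (ofLaurent p) =
      p.coeff.sum fun n c ↦ c • algebraMap WienerAlgebra WienerField (T n) := by
    rw [ofLaurent_eq_sum]
    exact (map_sum (IsScalarTower.toAlgHom ℂ WienerAlgebra WienerField) _ _).trans
      (Finset.sum_congr rfl fun n _ ↦ map_smul _ _ _)
  rw [h]
  refine sum_mem fun n _ ↦ ?_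
  change p.coeff n • algebraMap WienerAlgebra WienerField (T n) ∈ _
  rw [← algebraMap_X_zpow, ← algebraMap_smul (RatFunc ℂ)]
  exact Subalgebra.smul_mem _ (Subalgebra.algebraMap_mem _ _) _

section Patches

/-- The subring of the Wiener field that consists of the power series. -/
noncomputable def plusRing : Subring WienerField :=
  plus.toSubring.map (algebraMap WienerAlgebra WienerField)

/-- The subring of the Wiener field that consists of the power series in the inverse variable. -/
noncomputable def minusRing : Subring WienerField :=
  minus.toSubring.map (algebraMap WienerAlgebra WienerField)

theorem algebraMap_polynomial_mem_plusRing (p : ℂ[X]) :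
    algebraMap (RatFunc ℂ) WienerField (algebraMap ℂ[X] (RatFunc ℂ) p) ∈ plusRing :=
  ⟨_, algebraMap_mem_plus p, (algebraMap_algebraMap_polynomial p).symm⟩

theorem X_zpow_mul_mem_minusRing {p : ℂ[X]} {N : ℕ} (hN : p.natDegree ≤ N) :
    algebraMap (RatFunc ℂ) WienerField (RatFunc.X ^ (-N : ℤ) * algebraMap ℂ[X] (RatFunc ℂ) p) ∈
      minusRing := by
  refine ⟨_, T_mul_algebraMap_mem_minus hN, ?_⟩
  rw [map_mul, map_mul, algebraMap_X_zpow, algebraMap_algebraMap_polynomial]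

theorem exists_smul_mem_plusRing {x : WienerField}
    (hx : x ∈ Algebra.adjoin (RatFunc ℂ) (plusRing : Set WienerField)) :
    ∃ s : RatFunc ℂ, s ≠ 0 ∧ s • x ∈ plusRing := by
  have hclear (a : RatFunc ℂ) : ∃ s : RatFunc ℂ, s ≠ 0 ∧ algebraMap _ WienerField s ∈ plusRing ∧
      s • algebraMap _ WienerField a ∈ plusRing := by
    refine ⟨algebraMap _ _ a.denom, RatFunc.algebraMap_ne_zero a.denom_ne_zero,
      algebraMap_polynomial_mem_plusRing _, ?_⟩
    rw [Algebra.smul_def, ← map_mul, algebraMap_denom_mul]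
    exact algebraMap_polynomial_mem_plusRing _
  obtain ⟨s, hs, -, hsx⟩ := exists_smul_mem_of_mem_adjoin hclear hx
  exact ⟨s, hs, hsx⟩

theorem exists_smul_mem_minusRing {x : WienerField}
    (hx : x ∈ Algebra.adjoin (RatFunc ℂ) (minusRing : Set WienerField)) :
    ∃ s : RatFunc ℂ, s ≠ 0 ∧ s • x ∈ minusRing := by
  have hclear (a : RatFunc ℂ) : ∃ s : RatFunc ℂ, s ≠ 0 ∧ algebraMap _ WienerField s ∈ minusRing ∧
      s • algebraMap _ WienerField a ∈ minusRing := by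
    let N := max a.num.natDegree a.denom.natDegree
    refine ⟨RatFunc.X ^ (-N : ℤ) * algebraMap _ _ a.denom,
      mul_ne_zero (zpow_ne_zero _ RatFunc.X_ne_zero) (RatFunc.algebraMap_ne_zero a.denom_ne_zero),
      X_zpow_mul_mem_minusRing (le_max_right _ _), ?_⟩
    rw [Algebra.smul_def, ← map_mul, mul_assoc, algebraMap_denom_mul]
    exact X_zpow_mul_mem_minusRing (le_max_left _ _)
  obtain ⟨s, hs, -, hsx⟩ := exists_smul_mem_of_mem_adjoin hclear hx
  exact ⟨s, hs, hsx⟩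

theorem adjoin_plusRing_inf_adjoin_minusRing :
    Algebra.adjoin (RatFunc ℂ) (plusRing : Set WienerField) ⊓
      Algebra.adjoin (RatFunc ℂ) (minusRing : Set WienerField) = ⊥ := by
  refine eq_bot_iff.2 fun x ⟨hxp, hxm⟩ ↦ ?_
  obtain ⟨s, hs, f, hf, hfx⟩ := exists_smul_mem_plusRing hxp
  obtain ⟨r, hr, g, hg, hgx⟩ := exists_smul_mem_minusRing hxm
  have hclear {a : RatFunc ℂ} {h : WienerAlgebra} (hax : algebraMap _ WienerField h = a • x)
      (p : ℂ[X]) :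
      (p * a.num) • x = algebraMap _ WienerField (algebraMap _ _ (p * a.denom) * h) := by
    rw [map_mul, hax, ← algebraMap_algebraMap_polynomial, ← Algebra.smul_def, ← mul_smul, map_mul,
      mul_assoc, algebraMap_denom_mul, ← map_mul, algebraMap_smul]
  have hfg : algebraMap _ _ (r.num * s.denom) * f = algebraMap _ _ (s.num * r.denom) * g := by
    apply IsFractionRing.injective WienerAlgebra WienerField
    rw [← hclear hfx, ← hclear hgx, mul_comm]
  obtain ⟨q, hq⟩ := exists_algebraMap_eq (plus.mul_mem (algebraMap_mem_plus _) hf) (by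
    rw [hfg, ← mul_assoc]
    exact minus.mul_mem (T_mul_algebraMap_mem_minus le_rfl) hg)
  have hx := hclear hfx r.num
  rw [← hq, ← algebraMap_algebraMap_polynomial] at hx
  have hne : r.num * s.num ≠ 0 :=
    mul_ne_zero (RatFunc.num_ne_zero hr) (RatFunc.num_ne_zero hs)
  refine ⟨algebraMap _ _ q / algebraMap _ _ (r.num * s.num), ?_⟩
  change algebraMap (RatFunc ℂ) WienerField _ = x
  rw [map_div₀, div_eq_iff (by simpa using hne), ← hx, Algebra.smul_def, mul_comm,
    IsScalarTower.algebraMap_apply ℂ[X] (RatFunc ℂ) WienerField]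

open Matrix in
theorem exists_factorization {ι : Type*} [Fintype ι] [DecidableEq ι] {B : GL ι WienerField}
    (hB : B ∈ glOver ι (algebraMap WienerAlgebra WienerField).range) :
    ∃ Y ∈ glOver ι plusRing,
      ∃ X ∈ glOver ι (Algebra.adjoin (RatFunc ℂ) (minusRing : Set WienerField)).toSubring,
        B = Y * X := by
  obtain ⟨b, rfl⟩ := exists_map_eq_of_mem_glOver_range (IsFractionRing.injective _ _) hB
  obtain ⟨U, hU, V, hV, Y, hY, hbUV⟩ := exists_laurent_factorization b
  let mapGL := GeneralLinearGroup.map (n := ι) (algebraMap WienerAlgebra WienerField)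
  have hYplus : mapGL Y ∈ glOver ι plusRing :=
    map_mem_glOver (fun x hx ↦ Subring.mem_map.2 ⟨x, hx, rfl⟩) hY
  have hVminus : mapGL V ∈ glOver ι minusRing :=
    map_mem_glOver (fun x hx ↦ Subring.mem_map.2 ⟨x, hx, rfl⟩) hV
  have hUbot : mapGL U ∈ glOver ι (⊥ : Subalgebra (RatFunc ℂ) WienerField).toSubring :=
    mem_glOver_bot fun i k ↦ by
      obtain ⟨p, hp⟩ := hU i k
      rw [GeneralLinearGroup.map_apply, ← hp]
      exact algebraMap_ofLaurent_mem p
  refine ⟨_, hYplus, _, mul_mem (inv_mem (glOver_mono Algebra.subset_adjoin hVminus))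
    (inv_mem (glOver_mono (bot_le (α := Subalgebra (RatFunc ℂ) WienerField)) hUbot)), ?_⟩
  rw [← hbUV, map_mul, map_mul]
  change mapGL b = _
  group

end Patches

end WienerField

end WienerField

section Realization

open Polynomial WienerAlgebra WienerField

namespace WienerField

/-- The endomorphism of the Wiener field that extends an injective endomorphism of the Wiener
algebra, and so expresses a substitution for the variable. -/
noncomputable def subst (φ : WienerAlgebra →A[ℂ] WienerAlgebra) (hφ : Function.Injective φ) :
    WienerField →ₐ[ℂ] WienerField :=
  IsFractionRing.liftAlgHom
    (g := (IsScalarTower.toAlgHom ℂ WienerAlgebra WienerField).comp φ.toAlgHom)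
    ((IsFractionRing.injective WienerAlgebra WienerField).comp hφ)

theorem subst_algebraMap {φ : WienerAlgebra →A[ℂ] WienerAlgebra} (hφ : Function.Injective φ)
    (f : WienerAlgebra) : subst φ hφ (algebraMap WienerAlgebra WienerField f) =
      algebraMap WienerAlgebra WienerField (φ f) :=
  IsLocalization.lift_eq _ f

end WienerField

variable {G : Type*} [Group G] [Fintype G] [DecidableEq G]

open scoped IntermediateField

theorem HasGaloisForm.subst {φ : WienerAlgebra →A[ℂ] WienerAlgebra} (hφ : Function.Injective φ)
    (hφT : ℂ⟮algebraMap WienerAlgebra WienerField (φ (T 1))⟯ =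
      ℂ⟮algebraMap WienerAlgebra WienerField (T 1)⟯)
    {S S' : Subring WienerAlgebra} (hS : ∀ f ∈ S, φ f ∈ S') :
    HasGaloisForm (RatFunc ℂ) (S.map (algebraMap WienerAlgebra WienerField)) G →
      HasGaloisForm (RatFunc ℂ) (S'.map (algebraMap WienerAlgebra WienerField)) G := by
  refine .map (WienerField.subst φ hφ : WienerField →+* WienerField) (bot_toSubring_map_eq ?_) ?_
  · rwa [algebraMap_X, subst_algebraMap]
  · rintro _ ⟨f, hf, rfl⟩
    exact ⟨_, hS f hf, (subst_algebraMap hφ f).symm⟩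

theorem HasGaloisForm.minusRing_of_plusRing :
    HasGaloisForm (RatFunc ℂ) plusRing G → HasGaloisForm (RatFunc ℂ) minusRing G := by
  refine .subst flip_injective ?_ fun _ ↦ flip_mem_minus
  rw [flip_T, ← algebraMap_X_zpow, ← algebraMap_X_zpow, zpow_neg, map_inv₀]
  refine le_antisymm ?_ ?_ <;> rw [IntermediateField.adjoin_simple_le_iff]
  · exact inv_mem (IntermediateField.mem_adjoin_simple_self _ _)
  · exact inv_mem_iff.1 (IntermediateField.mem_adjoin_simple_self _ _)

theorem HasGaloisForm.plusRing_of_range :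
    HasGaloisForm (RatFunc ℂ) (algebraMap WienerAlgebra WienerField).range G →
      HasGaloisForm (RatFunc ℂ) plusRing G := by
  obtain ⟨φ, hφT, hφ, hφplus⟩ := exists_shift
  rw [RingHom.range_eq_map]
  refine .subst hφ ?_ fun f _ ↦ hφplus f
  have hX : algebraMap WienerAlgebra WienerField (φ (T 1)) =
      1 + (1 / 4 : ℂ) • algebraMap WienerAlgebra WienerField (T 1) := by
    rw [hφT, map_add, map_one]
    exact congr_arg _ (map_smul (IsScalarTower.toAlgHom ℂ WienerAlgebra WienerField) _ _)
  set x := algebraMap WienerAlgebra WienerField (T 1)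
  rw [hX]
  refine le_antisymm ?_ ?_ <;> rw [IntermediateField.adjoin_simple_le_iff]
  · exact add_mem (one_mem _)
      (IntermediateField.smul_mem _ (IntermediateField.mem_adjoin_simple_self _ _))
  · have hx : (4 : ℂ) • (1 + (1 / 4 : ℂ) • x - 1) = x := by
      rw [add_sub_cancel_left, smul_smul]
      norm_num
    have hmem := IntermediateField.mem_adjoin_simple_self ℂ (1 + (1 / 4 : ℂ) • x)
    have h := IntermediateField.smul_mem _ (x := 4) (sub_mem hmem (one_mem _))
    rwa [hx] at h

theorem HasGaloisForm.sup {H₁ H₂ : Subgroup G} [Fintype H₁] [Fintype H₂] [DecidableEq H₁]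
    [DecidableEq H₂] (hH : H₁ ⊔ H₂ = ⊤) (h₁ : HasGaloisForm (RatFunc ℂ) plusRing H₁)
    (h₂ : HasGaloisForm (RatFunc ℂ) plusRing H₂) : HasGaloisForm (RatFunc ℂ) plusRing G :=
  have hrange {R : Subring WienerAlgebra} :
      R.map (algebraMap WienerAlgebra WienerField) ≤
        (algebraMap WienerAlgebra WienerField).range :=
    fun _ ⟨f, _, hf⟩ ↦ ⟨f, hf⟩
  (glue hrange hrange Algebra.subset_adjoin Algebra.subset_adjoin
    adjoin_plusRing_inf_adjoin_minusRing (fun _ ↦ exists_factorization) hH h₁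
    h₂.minusRing_of_plusRing).plusRing_of_range

theorem exists_injective_character (G : Type*) [Group G] [Finite G] [IsCyclic G] :
    ∃ χ : G →* ℂ, Function.Injective χ := by
  have : NeZero (Nat.card G) := ⟨Nat.card_pos.ne'⟩
  have hcard : Nat.card G = Nat.card (rootsOfUnity (Nat.card G) ℂ) :=
    (Complex.card_rootsOfUnity _).symm
  have e := mulEquivOfCyclicCardEq hcard
  exact ⟨((Units.coeHom ℂ).comp (Subgroup.subtype _)).comp e.toMonoidHom,
    (Units.val_injective.comp Subtype.val_injective).comp e.injective⟩

theorem HasGaloisForm.of_isCyclic [IsCyclic G] : HasGaloisForm (RatFunc ℂ) plusRing G := by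
  obtain ⟨χ, hχ⟩ := exists_injective_character G
  obtain ⟨c, y, hc, hy, hy', hyn⟩ := exists_pow_eq_one_add_smul (Fintype.card_ne_zero (α := G))
  let x := Units.map (algebraMap WienerAlgebra WienerField : WienerAlgebra →* WienerField) y
  have hxn : (x : WienerField) ^ Fintype.card G =
      algebraMap (RatFunc ℂ) WienerField (1 + c • RatFunc.X) := by
    change algebraMap WienerAlgebra WienerField y ^ _ = _
    rw [← map_pow, hyn, algebraMap_one_add_smul_X]
  refine .of_kummer (k := ℂ) (fun a ↦ ⟨_, plus.algebraMap_mem a, rfl⟩) hχ (y := x) ⟨_, hy, rfl⟩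
    ⟨_, hy', by simp [x]⟩ (hxn ▸ Subalgebra.algebraMap_mem _ _) ?_
  rintro j hj hjn ⟨a, ha⟩
  refine pow_ne_pow_of_intDegree_eq_one (intDegree_one_add_smul_X hc) a hj hjn
    (FaithfulSMul.algebraMap_injective (RatFunc ℂ) WienerField ?_)
  rw [map_pow, ← hxn, pow_right_comm, map_pow]
  exact congr_arg (· ^ _) ha.symm

end Realization

end GaloisPatching

/-- Every finite group occurs as the Galois group of a finite Galois extension of
`ℂ(t)`, the field of rational functions in one indeterminate over `ℂ`. -/
theorem finite_group_occurs_as_galoisGroup_over_complex_ratFunc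
    (G : Type) [Group G] [Finite G] :
    ∃ (N : Type) (_ : Field N) (_ : Algebra (RatFunc ℂ) N),
      FiniteDimensional (RatFunc ℂ) N ∧ IsGalois (RatFunc ℂ) N ∧
        Nonempty ((N ≃ₐ[RatFunc ℂ] N) ≃* G) := by
  classical
  have := Fintype.ofFinite G
  have hform : GaloisPatching.HasGaloisForm (RatFunc ℂ) GaloisPatching.WienerField.plusRing G :=
    .of_cyclic_of_sup (fun _ ↦ .of_isCyclic) fun _ _ _ _ _ ↦ .sup
  exact hform.exists_isGalois
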